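/- Let (X_A, μ) be a topologically mixing Markov subshift of finite type satisfying the Doeblin condition, with the left shift T nonsingular with respect to μ. If there is an admissible configuration (B_k(i_k), B'_k(j_k))_{k≥1} such that the corresponding sequence D_k = log( P_{i_k}(B'_k) P_{j_k}(B_k) / ( P_{i_k}(B_k) P_{j_k}(B'_k) ) ) satisfies D_k → 0 as k → ∞ and Σ_{k≥1} D_k² = ∞, then the ratio set of the renormalization pseudo full-group satisfies e(𝓡_A) = ℝ, i.e., every real number is an essential value of the Radon–Nikodym cocycle of 𝓡_A. -/

import Mathlib

/-!
The essential values are realized by products of block exchanges. Let `f_k` be the involution which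
exchanges `B_k` at `i_k`, `B'_k` at `j_k` with `B'_k` at `i_k`, `B_k` at `j_k`, and fixes the points
where neither pattern is present. Its log derivative is `D_k sgn_k`, where `sgn_k` is `1`, `-1` or
`0` in the three cases. Exchanges at different sites commute, so the product `g_n` of the first `n`
of them is an involution with log derivative `L_n = ∑_{k < n} D_k sgn_k`, and `L_n ∘ g_n = -L_n`.

The ratio of the derivatives of `μ ∘ T^m` at `g_n x` and `x` is the exponential of the same sum for
transition matrices shifted by `m`. It tends to `1` because nonsingularity of the shift forces
`P_{n+1} - P_n → 0`: the martingale differences `1[x_n = s, x_{n+1} = t] - P_n(s,t) 1[x_n = s]` are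
orthogonal and bounded in `L²(μ)`, so their means under the absolutely continuous measure
`μ ∘ T⁻¹` tend to `0`. Hence `g_n` is in the renormalization pseudo full-group.

Let `r ≤ 0`; for `r ≥ 0` use that `g_n` reverses the sign of `L_n`. Approximate `E` by a set `C`
depending on a finite window, and use only sites outside that window with `|D_k| < ε`.
* By primitivity and the Doeblin condition, the pattern of a site has probability at least `c > 0`
  given everything inside. Comparison of the two patterns via `f_k` then gives
  `∫_C e^{L_{n+1}/2} ≤ (1 - c (e^{D_n/2} - 1)²) ∫_C e^{L_n/2}`, so `∑ D_k² = ∞` yields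
  `∫_C e^{L_n/2} → 0`. Hence almost every point of `C` has `L_n ≤ r` for some `n`, and since the
  increments are smaller than `ε`, some `L_n` is within `ε` of `r`.
* Let `F_n` be the set where this happens for the first time at `n`. If no `g_n` returned `E` to `E`
  on `F_n`, then every point of `C ∩ F_n` would lie in `C \ E` or be mapped by `g_n` into the part
  of `C \ E` where `L_n` is first near `-r`. Summation over `n` bounds `μ(C)` by
  `(1 + e^{-r+ε}) μ(C \ E)`, a contradiction if `C` approximates `E` well.
-/

open MeasureTheory Filter Topology

namespace MarkovSFT

/-- The space of two-sided sequences over `S`. -/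
abbrev Seq (S : Type*) := ℤ → S

/-- The shift by `n`: `(T^n x)_k = x_{k+n}`. -/
def shiftZ {S : Type*} (n : ℤ) (x : Seq S) : Seq S := fun k => x (k + n)

/-- The left shift `T`. -/
def shiftMap {S : Type*} : Seq S → Seq S := shiftZ 1

/-- The subshift of finite type determined by the adjacency matrix `A`. -/
def SFT {S : Type*} (A : S → S → Bool) : Set (Seq S) :=
  {x | ∀ n : ℤ, A (x n) (x (n + 1)) = true}

/-- `A` is primitive: all entries of `A^M` are positive for some `M ≥ 1`
(expressed via the existence of admissible paths of length `M`). -/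
def IsPrimitive {S : Type*} (A : S → S → Bool) : Prop :=
  ∃ M : ℕ, 1 ≤ M ∧ ∀ s t : S, ∃ u : ℕ → S,
    u 0 = s ∧ u M = t ∧ ∀ i < M, A (u i) (u (i + 1)) = true

/-- A stochastic matrix over the finite state space `S`. -/
def IsStochastic {S : Type*} [Fintype S] (P : S → S → ℝ) : Prop :=
  (∀ s t, 0 ≤ P s t) ∧ ∀ s, ∑ t, P s t = 1

/-- The Doeblin condition for the family of transition matrices `P` relative to `A`. -/
def Doeblin {S : Type*} (A : S → S → Bool) (P : ℤ → S → S → ℝ) : Prop :=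
  ∃ δ : ℝ, 0 < δ ∧ ∀ (n : ℤ) (s t : S), δ ≤ P n s t ↔ A s t = true

/-- `μ` is the Markov measure on the SFT `X_A` determined by the transition
matrices `(P n)` and coordinate distributions `(π n)`. -/
structure IsMarkovMeasure {S : Type*} [Fintype S] [MeasurableSpace S]
    (μ : Measure (Seq S)) (A : S → S → Bool)
    (P : ℤ → S → S → ℝ) (π : ℤ → S → ℝ) : Prop where
  isProb : IsProbabilityMeasure μ
  stochastic : ∀ n, IsStochastic (P n)
  compat : ∀ (n : ℤ) (s t : S), A s t = false → P n s t = 0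
  dist_nonneg : ∀ (n : ℤ) (s : S), 0 ≤ π n s
  dist_sum : ∀ n : ℤ, ∑ s, π n s = 1
  consistent : ∀ (n : ℤ) (t : S), ∑ s, π n s * P n s t = π (n + 1) t
  supp : μ (SFT A) = 1
  cylinder : ∀ (k : ℤ) (m : ℕ) (w : Fin (m + 1) → S),
    μ {x | ∀ i : Fin (m + 1), x (k + 1 + ((i : ℕ) : ℤ)) = w i}
      = ENNReal.ofReal (π (k + 1) (w 0) *
          ∏ i : Fin m, P (k + 1 + ((i : ℕ) : ℤ)) (w i.castSucc) (w i.succ))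

/-- The left shift is nonsingular with respect to `μ`:
`μ` and `μ ∘ T⁻¹` are mutually absolutely continuous. -/
def ShiftNonsingular {S : Type*} [Fintype S] [MeasurableSpace S]
    (μ : Measure (Seq S)) : Prop :=
  Measure.map (shiftMap (S := S)) μ ≪ μ ∧ μ ≪ Measure.map (shiftMap (S := S)) μ

/-- The left shift is conservative with respect to `μ`. -/
def ShiftConservative {S : Type*} [Fintype S] [MeasurableSpace S]
    (μ : Measure (Seq S)) : Prop :=
  ∀ E : Set (Seq S), MeasurableSet E → 0 < μ E →
    ∃ n : ℕ, 1 ≤ n ∧ 0 < μ (E ∩ (shiftMap (S := S))^[n] ⁻¹' E)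

/-- An element of the pseudo full-group `[[T]]` of the shift, together with
(a version of) the logarithm of its Radon–Nikodym derivative `log dμ∘V/dμ`. -/
structure PFG {S : Type*} [Fintype S] [MeasurableSpace S] (μ : Measure (Seq S)) where
  dom : Set (Seq S)
  toFun : Seq S → Seq S
  logDeriv : Seq S → ℝ
  meas_dom : MeasurableSet dom
  meas_toFun : Measurable toFun
  meas_logDeriv : Measurable logDeriv
  injOn : Set.InjOn toFun dom
  orbit : ∀ᵐ x ∂μ.restrict dom, ∃ n : ℤ, toFun x = shiftZ n x
  deriv_spec : ∀ E : Set (Seq S), E ⊆ dom → MeasurableSet E →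
    μ (toFun '' E) = ∫⁻ x in E, ENNReal.ofReal (Real.exp (logDeriv x)) ∂μ

/-- `r` is an essential value of (the Radon–Nikodym cocycle of) the shift on `(X, μ)`. -/
def IsEssentialValue {S : Type*} [Fintype S] [MeasurableSpace S]
    (μ : Measure (Seq S)) (r : ℝ) : Prop :=
  ∀ E : Set (Seq S), MeasurableSet E → 0 < μ E → ∀ ε : ℝ, 0 < ε →
    ∃ g : PFG μ,
      0 < μ (E ∩ g.dom ∩ g.toFun ⁻¹' E ∩ {x | |g.logDeriv x - r| < ε})

end MarkovSFT
namespace MarkovSFT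

/-- The weight `P_i(B) = P_i(b_1,b_2) ⋯ P_{i+ℓ-2}(b_{ℓ-1},b_ℓ)` of the block `B`
(of length `ℓ`, indexed from `0`) placed at coordinate `i`. -/
noncomputable def wordP {S : Type*} (P : ℤ → S → S → ℝ) (i : ℤ)
    (B : ℕ → S) (ℓ : ℕ) : ℝ :=
  ∏ l ∈ Finset.range (ℓ - 1), P (i + (l : ℤ)) (B l) (B (l + 1))

/-- An element of the renormalization pseudo full-group `[[𝓡_A]]`: a nonsingular
measurable injection `V : dom → X_A`, moving a.e. point within its
finite-coordinate-change class, with log Radon–Nikodym derivative `logDeriv`,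
such that a.e. on `dom` the ratio `(d(μ∘Tⁿ∘V)/dμ)(x) / (d(μ∘Tⁿ)/dμ)(x)`
(computed via the chain rule) tends to `1` as `|n| → ∞`. -/
structure RenormPFG {S : Type*} [Fintype S] [MeasurableSpace S]
    (μ : Measure (Seq S)) where
  dom : Set (Seq S)
  toFun : Seq S → Seq S
  logDeriv : Seq S → ℝ
  meas_dom : MeasurableSet dom
  meas_toFun : Measurable toFun
  meas_logDeriv : Measurable logDeriv
  injOn : Set.InjOn toFun dom
  finite_diff : ∀ᵐ x ∂μ.restrict dom, {k : ℤ | toFun x k ≠ x k}.Finite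
  deriv_spec : ∀ E : Set (Seq S), E ⊆ dom → MeasurableSet E →
    μ (toFun '' E) = ∫⁻ x in E, ENNReal.ofReal (Real.exp (logDeriv x)) ∂μ
  renorm : ∀ᵐ x ∂μ.restrict dom,
    Tendsto (fun n : ℤ =>
        Measure.rnDeriv (Measure.map (shiftZ (-n)) μ) μ (toFun x)
            * ENNReal.ofReal (Real.exp (logDeriv x))
          / Measure.rnDeriv (Measure.map (shiftZ (-n)) μ) μ x)
      cofinite (𝓝 (1 : ENNReal))

/-- `r` is an essential value of the Radon–Nikodym cocycle of the
renormalization pseudo full-group `𝓡_A`. -/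
def IsEssentialValueRenorm {S : Type*} [Fintype S] [MeasurableSpace S]
    (μ : Measure (Seq S)) (r : ℝ) : Prop :=
  ∀ E : Set (Seq S), MeasurableSet E → 0 < μ E → ∀ ε : ℝ, 0 < ε →
    ∃ g : RenormPFG μ,
      0 < μ (E ∩ g.dom ∩ g.toFun ⁻¹' E ∩ {x | |g.logDeriv x - r| < ε})

end MarkovSFT

namespace MarkovSFT

/-! ### Cylinders -/

section Cylinders
variable {ι S β : Type*}

/-- The cylinder of all families that agree with `w` on the finite index set `s`. -/
def cyl (s : Finset ι) (w : ι → S) : Set (ι → S) := {x | ∀ k ∈ s, x k = w k}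

@[simp] lemma mem_cyl {s : Finset ι} {w x : ι → S} : x ∈ cyl s w ↔ ∀ k ∈ s, x k = w k := Iff.rfl

lemma mem_cyl_congr {s : Finset ι} {w x y : ι → S} (h : ∀ k ∈ s, x k = y k) :
    x ∈ cyl s w ↔ y ∈ cyl s w :=
  forall₂_congr fun k hk => by rw [h k hk]

lemma restrict_preimage_singleton (s : Finset ι) (x : ι → S) :
    s.restrict (π := fun _ => S) ⁻¹' {s.restrict x} = cyl s x := by
  ext y
  simp [funext_iff]

lemma dependsOn_mem_cyl (s : Finset ι) (w : ι → S) : DependsOn (· ∈ cyl s w) (s : Set ι) :=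
  fun _ _ h => propext (mem_cyl_congr h)

lemma dependsOn_indicator {M : Type*} [Zero M] {s : Set ι} {U : Set (ι → S)} {f : (ι → S) → M}
    (hU : DependsOn (· ∈ U) s) (hf : DependsOn f s) : DependsOn (U.indicator f) s := by
  classical
  intro x y hxy
  simp only [Set.indicator_apply, hU hxy, hf hxy]

variable [MeasurableSpace S]

lemma exists_dependsOn_of_mem_measurableCylinders {U : Set (ι → S)}
    (hU : U ∈ measurableCylinders fun _ : ι => S) :
    ∃ s : Finset ι, DependsOn (· ∈ U) (s : Set ι) := by
  obtain ⟨s, V, -, rfl⟩ := (mem_measurableCylinders U).1 hU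
  refine ⟨s, fun x y hxy => ?_⟩
  have : s.restrict x = s.restrict y := funext fun k => hxy k k.2
  simp only [mem_cylinder, this]

lemma exists_dependsOn_symmDiff_lt (ν : Measure (ι → S)) [IsFiniteMeasure ν] {E : Set (ι → S)}
    (hE : MeasurableSet E) {κ : ℝ} (hκ : 0 < κ) :
    ∃ (s : Finset ι) (C : Set (ι → S)), DependsOn (· ∈ C) (s : Set ι) ∧
      ν.real (symmDiff E C) < κ := by
  have hdense := Measure.MeasureDense.of_generateFrom_isSetAlgebra_finite ν
    (isSetAlgebra_measurableCylinders (α := fun _ : ι => S)) generateFrom_measurableCylinders.symm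
  obtain ⟨C, hC, hEC⟩ := hdense.approx E hE (measure_ne_top _ _) _ hκ
  obtain ⟨s, hs⟩ := exists_dependsOn_of_mem_measurableCylinders hC
  exact ⟨s, C, hs, ENNReal.toReal_lt_of_lt_ofReal hEC⟩

variable [MeasurableSingletonClass S]

lemma measurableSet_cyl (s : Finset ι) (w : ι → S) : MeasurableSet (cyl s w) :=
  MeasurableSet.pi s.countable_toSet fun k _ => measurableSet_singleton (w k)

lemma measurableSet_apply_eq (k : ι) (s : S) : MeasurableSet {x : ι → S | x k = s} := by
  simpa [cyl] using measurableSet_cyl {k} fun _ => s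

variable [Finite S]

lemma measurable_of_dependsOn [MeasurableSpace β] {s : Finset ι} {f : (ι → S) → β}
    (hf : DependsOn f (s : Set ι)) : Measurable f := by
  rcases isEmpty_or_nonempty β with hβ | hβ
  · have := f.isEmpty
    exact measurable_of_empty f
  · obtain ⟨g, rfl⟩ := dependsOn_iff_exists_comp.1 hf
    exact (measurable_of_finite g).comp (Finset.measurable_restrict s)

lemma measurableSet_of_dependsOn {s : Finset ι} {U : Set (ι → S)}
    (hU : DependsOn (· ∈ U) (s : Set ι)) : MeasurableSet U :=
  measurableSet_setOfPred.2 (measurable_of_dependsOn hU)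

variable {ν₁ ν₂ : Measure (ι → S)} {s : Finset ι}

lemma map_restrict_le_of_cyl (h : ∀ w, ν₁ (cyl s w) ≤ ν₂ (cyl s w)) :
    ν₁.map s.restrict ≤ ν₂.map s.restrict := by
  have hs : Measurable (s.restrict (π := fun _ => S)) := Finset.measurable_restrict s
  have hsingle (v : s → S) : ν₁ (s.restrict ⁻¹' {v}) ≤ ν₂ (s.restrict ⁻¹' {v}) := by
    by_cases hv : v ∈ Set.range (s.restrict (π := fun _ => S))
    · obtain ⟨x, rfl⟩ := hv
      simpa only [restrict_preimage_singleton] using h x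
    · simp [Set.preimage_singleton_eq_empty.2 hv]
  refine Measure.le_iff.2 fun V hV => ?_
  have hsum (ν : Measure (ι → S)) :
      ν.map s.restrict V = ∑ v ∈ V.toFinite.toFinset, ν (s.restrict ⁻¹' {v}) := by
    rw [sum_measure_preimage_singleton _ fun v _ => hs (measurableSet_singleton v),
      V.toFinite.coe_toFinset, Measure.map_apply hs hV]
  simpa only [hsum] using Finset.sum_le_sum fun v _ => hsingle v

lemma lintegral_le_of_cyl (h : ∀ w, ν₁ (cyl s w) ≤ ν₂ (cyl s w)) {f : (ι → S) → ENNReal}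
    (hf : DependsOn f (s : Set ι)) : ∫⁻ x, f x ∂ν₁ ≤ ∫⁻ x, f x ∂ν₂ := by
  obtain ⟨g, rfl⟩ := dependsOn_iff_exists_comp.1 hf
  have hmap (ν : Measure (ι → S)) :
      ∫⁻ x, (g ∘ (s : Set ι).domRestrict) x ∂ν = ∫⁻ v, g v ∂ν.map s.restrict :=
    (lintegral_map (measurable_of_finite g) (Finset.measurable_restrict s)).symm
  simpa only [hmap] using lintegral_mono' (map_restrict_le_of_cyl h) le_rfl

lemma measure_le_of_cyl (h : ∀ w, ν₁ (cyl s w) ≤ ν₂ (cyl s w)) {U : Set (ι → S)}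
    (hU : DependsOn (· ∈ U) (s : Set ι)) : ν₁ U ≤ ν₂ U := by
  have hUm := measurableSet_of_dependsOn hU
  simpa only [lintegral_indicator_one hUm] using
    lintegral_le_of_cyl h (dependsOn_indicator (f := 1) hU fun _ _ _ => rfl)

lemma integral_eq_of_cyl (h : ∀ w, ν₁ (cyl s w) = ν₂ (cyl s w)) {f : (ι → S) → ℝ}
    (hf : DependsOn f (s : Set ι)) : ∫ x, f x ∂ν₁ = ∫ x, f x ∂ν₂ := by
  obtain ⟨g, rfl⟩ := dependsOn_iff_exists_comp.1 hf
  have hmap (ν : Measure (ι → S)) :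
      ∫ x, (g ∘ (s : Set ι).domRestrict) x ∂ν = ∫ v, g v ∂ν.map s.restrict :=
    (integral_map (Finset.measurable_restrict s).aemeasurable
      (measurable_of_finite g).aestronglyMeasurable).symm
  rw [hmap, hmap, le_antisymm (map_restrict_le_of_cyl fun w => (h w).le)
    (map_restrict_le_of_cyl fun w => (h w).ge)]

lemma ext_of_cofinal_cyl [IsFiniteMeasure ν₁]
    (h : ∀ s : Finset ι, ∃ t, s ⊆ t ∧ ∀ w, ν₁ (cyl t w) = ν₂ (cyl t w)) : ν₁ = ν₂ := by
  have hcyl : ∀ U ∈ measurableCylinders fun _ : ι => S, ν₁ U = ν₂ U := by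
    intro U hU
    obtain ⟨s, hs⟩ := exists_dependsOn_of_mem_measurableCylinders hU
    obtain ⟨t, hst, ht⟩ := h s
    have hUt := hs.mono (Finset.coe_subset.2 hst)
    exact le_antisymm (measure_le_of_cyl (fun w => (ht w).le) hUt)
      (measure_le_of_cyl (fun w => (ht w).ge) hUt)
  exact ext_of_generate_finite _ generateFrom_measurableCylinders.symm
    isPiSystem_measurableCylinders hcyl (hcyl _ (univ_mem_measurableCylinders _))

end Cylinders

/-! ### Logarithmic derivatives of involutions -/

section LogDeriv
variable {X : Type*} [MeasurableSpace X] {ν : Measure X} {f g : X → X} {K L : X → ℝ}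

/-- `L` is the logarithm of the Radon–Nikodym derivative `dν∘g/dν` of the involution `g`. As
`g = g⁻¹`, the measure `ν ∘ g` is written as the pushforward of `ν`. -/
def HasLogDeriv (ν : Measure X) (g : X → X) (L : X → ℝ) : Prop :=
  ν.map g = ν.withDensity fun x => ENNReal.ofReal (Real.exp (L x))

namespace HasLogDeriv

lemma absolutelyContinuous (h : HasLogDeriv ν g L) : ν.map g ≪ ν :=
  h ▸ withDensity_absolutelyContinuous ν _

lemma measure_preimage (h : HasLogDeriv ν g L) (hg : Measurable g) {U : Set X}
    (hU : MeasurableSet U) : ν (g ⁻¹' U) = ∫⁻ x in U, ENNReal.ofReal (Real.exp (L x)) ∂ν := by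
  rw [← Measure.map_apply hg hU, h, withDensity_apply _ hU]

lemma lintegral_comp (h : HasLogDeriv ν g L) (hg : Measurable g) (hL : Measurable L)
    {F : X → ENNReal} (hF : Measurable F) :
    ∫⁻ x, F (g x) ∂ν = ∫⁻ x, ENNReal.ofReal (Real.exp (L x)) * F x ∂ν := by
  rw [← lintegral_map hF hg, h, lintegral_withDensity_eq_lintegral_mul ν (by fun_prop) hF]
  rfl

end HasLogDeriv

lemma map_withDensity_of_involutive (hg : Measurable g) (hgg : Function.Involutive g)
    {ρ : X → ENNReal} (hρ : Measurable ρ) :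
    (ν.withDensity ρ).map g = (ν.map g).withDensity (ρ ∘ g) := by
  ext s hs
  rw [Measure.map_apply hg hs, withDensity_apply _ (hg hs), withDensity_apply _ hs,
    setLIntegral_map hs (hρ.comp hg) hg]
  simp only [Function.comp, hgg _]

namespace HasLogDeriv

lemma comp (hf : HasLogDeriv ν f K) (hg : HasLogDeriv ν g L) (hfm : Measurable f)
    (hff : Function.Involutive f) (hgm : Measurable g) (hK : Measurable K) (hL : Measurable L) :
    HasLogDeriv ν (f ∘ g) fun x => K x + L (f x) := by
  rw [HasLogDeriv, ← Measure.map_map hfm hgm, hg,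
    map_withDensity_of_involutive hfm hff (by fun_prop), hf,
    ← withDensity_mul _ (by fun_prop) (by fun_prop)]
  simp only [Pi.mul_def, Function.comp, ← ENNReal.ofReal_mul (Real.exp_nonneg _), ← Real.exp_add]

/-- Both sides are the density with respect to `ν` of the pushforward of `ν'` by `g`. -/
lemma rnDeriv_comp_mul_div_rnDeriv {ν' : Measure X} [IsFiniteMeasure ν] [IsFiniteMeasure ν']
    (h : HasLogDeriv ν g K) (h' : HasLogDeriv ν' g L) (hν'ν : ν' ≪ ν) (hνν' : ν ≪ ν')
    (hg : Measurable g) (hgg : Function.Involutive g) (hK : Measurable K) (hL : Measurable L) :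
    ∀ᵐ x ∂ν, ν'.rnDeriv ν (g x) * ENNReal.ofReal (Real.exp (K x)) / ν'.rnDeriv ν x
      = ENNReal.ofReal (Real.exp (L x)) := by
  have hm := Measure.measurable_rnDeriv ν' ν
  have hν' : ν.withDensity (ν'.rnDeriv ν) = ν' := Measure.withDensity_rnDeriv_eq ν' ν hν'ν
  have hdensity :
      ν.withDensity ((fun x => ENNReal.ofReal (Real.exp (K x))) * ν'.rnDeriv ν ∘ g)
        = ν.withDensity (ν'.rnDeriv ν * fun x => ENNReal.ofReal (Real.exp (L x))) := by
    rw [withDensity_mul _ (by fun_prop) (hm.comp hg), ← show ν.map g = _ from h,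
      ← map_withDensity_of_involutive hg hgg hm, hν', h',
      withDensity_mul _ hm (by fun_prop), hν']
  have hae := (withDensity_eq_iff_of_sigmaFinite (by fun_prop) (by fun_prop)).1 hdensity
  filter_upwards [hae, Measure.rnDeriv_lt_top ν' ν, Measure.rnDeriv_pos' hνν'] with x hx hlt hpos
  simp only [Pi.mul_apply, Function.comp] at hx
  rw [mul_comm, hx, mul_comm, ENNReal.mul_div_cancel_right hpos.ne' hlt.ne]

end HasLogDeriv

end LogDeriv

/-! ### Exchanges of two patterns -/

/-- Two different patterns `u`, `v` on a finite index set, to be exchanged with each other. The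
values of `u` and `v` off `supp` are irrelevant. -/
structure Exchange (ι S : Type*) where
  supp : Finset ι
  u : ι → S
  v : ι → S
  ne : ∃ k ∈ supp, u k ≠ v k

namespace Exchange
variable {ι S : Type*} (e : Exchange ι S)

/-- The set where the first pattern occurs. -/
def plus : Set (ι → S) := cyl e.supp e.u

/-- The set where the second pattern occurs. -/
def minus : Set (ι → S) := cyl e.supp e.v

open Classical in
/-- The involution that exchanges the two patterns and fixes all points having neither. -/
noncomputable def flip (x : ι → S) : ι → S :=
  if x ∈ e.plus then e.supp.piecewise e.v x
  else if x ∈ e.minus then e.supp.piecewise e.u x else x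

/-- The state of a point with respect to the exchange: `1` on `plus`, `-1` on `minus`, and `0`
elsewhere. -/
noncomputable def sgn (x : ι → S) : ℝ := e.plus.indicator 1 x - e.minus.indicator 1 x

variable {e}

lemma disjoint_plus_minus : Disjoint e.plus e.minus := by
  obtain ⟨k, hk, hne⟩ := e.ne
  exact Set.disjoint_left.2 fun x hu hv => hne ((hu k hk).symm.trans (hv k hk))

lemma notMem_plus {x : ι → S} (h : x ∈ e.minus) : x ∉ e.plus :=
  fun h' => disjoint_plus_minus.notMem_of_mem_left h' h

lemma mem_plus_or_mem_minus_or (x : ι → S) :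
    x ∈ e.plus ∨ x ∈ e.minus ∨ x ∉ e.plus ∧ x ∉ e.minus := by
  tauto

open Classical in
lemma flip_of_mem_plus {x : ι → S} (h : x ∈ e.plus) : e.flip x = e.supp.piecewise e.v x := by
  simp [flip, h]

open Classical in
lemma flip_of_mem_minus {x : ι → S} (h : x ∈ e.minus) : e.flip x = e.supp.piecewise e.u x := by
  simp [flip, h, notMem_plus h]

lemma flip_of_notMem {x : ι → S} (h : x ∉ e.plus) (h' : x ∉ e.minus) : e.flip x = x := by
  simp [flip, h, h']

lemma sgn_of_mem_plus {x : ι → S} (h : x ∈ e.plus) : e.sgn x = 1 := by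
  simp [sgn, h, disjoint_plus_minus.notMem_of_mem_left h]

lemma sgn_of_mem_minus {x : ι → S} (h : x ∈ e.minus) : e.sgn x = -1 := by
  simp [sgn, h, notMem_plus h]

lemma sgn_of_notMem {x : ι → S} (h : x ∉ e.plus) (h' : x ∉ e.minus) : e.sgn x = 0 := by
  simp [sgn, h, h']

lemma abs_sgn_le_one (x : ι → S) : |e.sgn x| ≤ 1 := by
  rcases e.mem_plus_or_mem_minus_or x with h | h | ⟨h, h'⟩
  · simp [sgn_of_mem_plus h]
  · simp [sgn_of_mem_minus h]
  · simp [sgn_of_notMem h h']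

lemma flip_mem_minus {x : ι → S} (h : x ∈ e.plus) : e.flip x ∈ e.minus := by
  rw [flip_of_mem_plus h]
  exact fun k hk => by simp [hk]

lemma flip_mem_plus {x : ι → S} (h : x ∈ e.minus) : e.flip x ∈ e.plus := by
  rw [flip_of_mem_minus h]
  exact fun k hk => by simp [hk]

lemma flip_mem_plus_iff {x : ι → S} : e.flip x ∈ e.plus ↔ x ∈ e.minus := by
  refine ⟨fun h => ?_, flip_mem_plus⟩
  rcases e.mem_plus_or_mem_minus_or x with hx | hx | ⟨hx, hx'⟩
  · exact absurd h (notMem_plus (flip_mem_minus hx))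
  · exact hx
  · exact absurd (flip_of_notMem hx hx' ▸ h) hx

lemma flip_apply_of_notMem (x : ι → S) {k : ι} (hk : k ∉ e.supp) : e.flip x k = x k := by
  rw [flip]; split_ifs <;> simp [hk]

lemma dependsOn_sgn : DependsOn e.sgn (e.supp : Set ι) := by
  intro x y hxy
  simp only [sgn, plus, minus]
  congr 1 <;> exact dependsOn_indicator (f := 1) (dependsOn_mem_cyl _ _) (fun _ _ _ => rfl) hxy

lemma flip_apply_congr {x y : ι → S} (h : ∀ k ∈ e.supp, x k = y k) {k : ι} (hk : x k = y k) :
    e.flip x k = e.flip y k := by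
  rcases e.mem_plus_or_mem_minus_or x with hx | hx | ⟨hx, hx'⟩
  · have hy : y ∈ e.plus := (mem_cyl_congr h).1 hx
    simp [flip_of_mem_plus, hx, hy, Finset.piecewise, hk]
  · have hy : y ∈ e.minus := (mem_cyl_congr h).1 hx
    simp [flip_of_mem_minus, hx, hy, Finset.piecewise, hk]
  · have hy : y ∉ e.plus := (mem_cyl_congr h).not.1 hx
    have hy' : y ∉ e.minus := (mem_cyl_congr h).not.1 hx'
    rw [flip_of_notMem hx hx', flip_of_notMem hy hy', hk]

lemma flip_involutive : Function.Involutive e.flip := by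
  classical
  intro x
  rcases e.mem_plus_or_mem_minus_or x with h | h | ⟨h, h'⟩
  · rw [flip_of_mem_minus (flip_mem_minus h), flip_of_mem_plus h]
    ext k
    by_cases hk : k ∈ e.supp
    · simpa [hk] using (h k hk).symm
    · simp [hk]
  · rw [flip_of_mem_plus (flip_mem_plus h), flip_of_mem_minus h]
    ext k
    by_cases hk : k ∈ e.supp
    · simpa [hk] using (h k hk).symm
    · simp [hk]
  · rw [flip_of_notMem h h', flip_of_notMem h h']

lemma sgn_flip (x : ι → S) : e.sgn (e.flip x) = -e.sgn x := by
  rcases e.mem_plus_or_mem_minus_or x with h | h | ⟨h, h'⟩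
  · rw [sgn_of_mem_minus (flip_mem_minus h), sgn_of_mem_plus h]
  · rw [sgn_of_mem_plus (flip_mem_plus h), sgn_of_mem_minus h, neg_neg]
  · rw [flip_of_notMem h h', sgn_of_notMem h h', neg_zero]

lemma flip_preimage_cyl {t : Finset ι} (ht : e.supp ⊆ t) (w : ι → S) :
    e.flip ⁻¹' cyl t w = cyl t (e.flip w) := by
  have hflip {x w : ι → S} (hx : x ∈ cyl t w) : e.flip x ∈ cyl t (e.flip w) := fun k hk =>
    flip_apply_congr (fun l hl => hx l (ht hl)) (hx k hk)
  ext x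
  constructor <;> intro hx
  · simpa only [flip_involutive x] using hflip hx
  · simpa only [Set.mem_preimage, flip_involutive w] using hflip hx

variable {e' : Exchange ι S}

lemma sgn_flip_of_disjoint (h : Disjoint e.supp e'.supp) (x : ι → S) :
    e'.sgn (e.flip x) = e'.sgn x :=
  dependsOn_sgn fun _ hk => flip_apply_of_notMem x (Finset.disjoint_right.1 h hk)

lemma flip_flip_comm (h : Disjoint e.supp e'.supp) (x : ι → S) :
    e.flip (e'.flip x) = e'.flip (e.flip x) := by
  have hoff {k} (hk : k ∈ e.supp) : k ∉ e'.supp := Finset.disjoint_left.1 h hk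
  have hoff' {k} (hk : k ∈ e'.supp) : k ∉ e.supp := Finset.disjoint_right.1 h hk
  ext k
  by_cases hk : k ∈ e.supp
  · rw [flip_apply_of_notMem _ (hoff hk)]
    exact flip_apply_congr (fun l hl => flip_apply_of_notMem x (hoff hl))
      (flip_apply_of_notMem x (hoff hk))
  · rw [flip_apply_of_notMem _ hk]
    exact flip_apply_congr (fun l hl => (flip_apply_of_notMem x (hoff' hl)).symm)
      (flip_apply_of_notMem x hk).symm

variable [MeasurableSpace S] [MeasurableSingletonClass S]

lemma measurableSet_plus : MeasurableSet e.plus := measurableSet_cyl _ _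

lemma measurableSet_minus : MeasurableSet e.minus := measurableSet_cyl _ _

variable [Finite S]

@[fun_prop]
lemma measurable_sgn : Measurable e.sgn := measurable_of_dependsOn dependsOn_sgn

@[fun_prop]
lemma measurable_flip : Measurable e.flip := by
  classical
  refine measurable_pi_lambda _ fun k => measurable_of_dependsOn (s := insert k e.supp) ?_
  intro x y hxy
  simp only [Finset.coe_insert, Set.forall_mem_insert] at hxy
  exact flip_apply_congr hxy.2 hxy.1

lemma hasLogDeriv_flip {ν : Measure (ι → S)} [IsFiniteMeasure ν] {D : ℝ}
    (h : ∀ s : Finset ι, ∃ t, s ⊆ t ∧ ∀ w,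
      ν (cyl t (e.flip w)) = ENNReal.ofReal (Real.exp (D * e.sgn w)) * ν (cyl t w)) :
    HasLogDeriv ν e.flip fun x => D * e.sgn x := by
  classical
  refine ext_of_cofinal_cyl fun s => ?_
  obtain ⟨t, hst, ht⟩ := h (s ∪ e.supp)
  obtain ⟨hs, he⟩ := Finset.union_subset_iff.1 hst
  refine ⟨t, hs, fun w => ?_⟩
  have hconst : Set.EqOn (fun x => ENNReal.ofReal (Real.exp (D * e.sgn x)))
      (fun _ => ENNReal.ofReal (Real.exp (D * e.sgn w))) (cyl t w) := fun x hx => by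
    simp only [dependsOn_sgn fun k hk => hx k (he hk)]
  rw [Measure.map_apply measurable_flip (measurableSet_cyl _ _), flip_preimage_cyl he, ht,
    withDensity_apply _ (measurableSet_cyl _ _),
    setLIntegral_congr_fun (measurableSet_cyl _ _) hconst, setLIntegral_const]

end Exchange

/-! ### Products of exchanges -/

section MultiFlip
variable {ι S : Type*} {σ : ℕ → Exchange ι S} {D : ℕ → ℝ}

/-- The product of the first `n` exchanges. -/
noncomputable def multiFlip (σ : ℕ → Exchange ι S) : ℕ → (ι → S) → (ι → S)
  | 0 => id
  | n + 1 => (σ n).flip ∘ multiFlip σ n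

/-- The logarithmic derivative of `multiFlip σ n`, if that of the `k`-th exchange is
`D k * (σ k).sgn`. -/
noncomputable def cocycle (σ : ℕ → Exchange ι S) (D : ℕ → ℝ) (n : ℕ) (x : ι → S) : ℝ :=
  ∑ k ∈ Finset.range n, D k * (σ k).sgn x

lemma cocycle_succ (n : ℕ) (x : ι → S) :
    cocycle σ D (n + 1) x = cocycle σ D n x + D n * (σ n).sgn x :=
  Finset.sum_range_succ _ _

lemma multiFlip_apply_of_notMem {n : ℕ} (x : ι → S) {k : ι} (hk : ∀ m < n, k ∉ (σ m).supp) :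
    multiFlip σ n x k = x k := by
  induction n with
  | zero => rfl
  | succ n ih =>
    exact (Exchange.flip_apply_of_notMem _ (hk n n.lt_succ_self)).trans
      (ih fun m hm => hk m (hm.trans n.lt_succ_self))

lemma finite_multiFlip_apply_ne (n : ℕ) (x : ι → S) : {k | multiFlip σ n x k ≠ x k}.Finite := by
  classical
  refine ((Finset.range n).biUnion fun m => (σ m).supp).finite_toSet.subset fun k hk => ?_
  by_contra hnot
  exact hk (multiFlip_apply_of_notMem x (by simpa using hnot))

lemma flip_multiFlip_comm (hσ : Pairwise fun m n => Disjoint (σ m).supp (σ n).supp) {n m : ℕ}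
    (hnm : n ≤ m) (x : ι → S) : (σ m).flip (multiFlip σ n x) = multiFlip σ n ((σ m).flip x) := by
  induction n with
  | zero => rfl
  | succ n ih =>
    exact (Exchange.flip_flip_comm (hσ (by omega)) _).trans
      (congrArg (σ n).flip (ih (by omega)))

lemma multiFlip_involutive (hσ : Pairwise fun m n => Disjoint (σ m).supp (σ n).supp) (n : ℕ) :
    Function.Involutive (multiFlip σ n) := by
  induction n with
  | zero => exact fun _ => rfl
  | succ n ih =>
    intro x
    simp only [multiFlip, Function.comp]
    rw [← flip_multiFlip_comm hσ le_rfl, Exchange.flip_involutive, ih]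

lemma sgn_multiFlip_of_le (hσ : Pairwise fun m n => Disjoint (σ m).supp (σ n).supp) {n m : ℕ}
    (hnm : n ≤ m) (x : ι → S) : (σ m).sgn (multiFlip σ n x) = (σ m).sgn x := by
  induction n with
  | zero => rfl
  | succ n ih =>
    exact (Exchange.sgn_flip_of_disjoint (hσ (by omega)) _).trans (ih (by omega))

lemma sgn_multiFlip_of_lt (hσ : Pairwise fun m n => Disjoint (σ m).supp (σ n).supp) {n m : ℕ}
    (hmn : m < n) (x : ι → S) : (σ m).sgn (multiFlip σ n x) = -(σ m).sgn x := by
  induction n with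
  | zero => omega
  | succ n ih =>
    rcases (Nat.lt_succ_iff.1 hmn).eq_or_lt with rfl | hlt
    · exact (Exchange.sgn_flip _).trans (congrArg _ (sgn_multiFlip_of_le hσ le_rfl x))
    · exact (Exchange.sgn_flip_of_disjoint (hσ hlt.ne') _).trans (ih hlt)

lemma cocycle_multiFlip (hσ : Pairwise fun m n => Disjoint (σ m).supp (σ n).supp) {m n : ℕ}
    (hmn : m ≤ n) (x : ι → S) : cocycle σ D m (multiFlip σ n x) = -cocycle σ D m x := by
  simp only [cocycle, ← Finset.sum_neg_distrib]
  refine Finset.sum_congr rfl fun k hk => ?_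
  rw [sgn_multiFlip_of_lt hσ ((Finset.mem_range.1 hk).trans_le hmn), mul_neg]

lemma dependsOn_cocycle {n : ℕ} {s : Set ι} (hs : ∀ k < n, ↑(σ k).supp ⊆ s) :
    DependsOn (cocycle σ D n) s := fun _ _ hxy =>
  Finset.sum_congr rfl fun k hk => by
    rw [Exchange.dependsOn_sgn.mono (hs k (Finset.mem_range.1 hk)) hxy]

variable [MeasurableSpace S] [MeasurableSingletonClass S] [Finite S]

@[fun_prop]
lemma measurable_multiFlip (n : ℕ) : Measurable (multiFlip σ n) := by
  induction n with
  | zero => exact measurable_id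
  | succ n ih => exact Exchange.measurable_flip.comp ih

@[fun_prop]
lemma measurable_cocycle (n : ℕ) : Measurable (cocycle σ D n) :=
  Finset.measurable_fun_sum _ fun _ _ => Exchange.measurable_sgn.const_mul _

lemma hasLogDeriv_multiFlip (hσ : Pairwise fun m n => Disjoint (σ m).supp (σ n).supp)
    {ν : Measure (ι → S)} (h : ∀ k, HasLogDeriv ν (σ k).flip fun x => D k * (σ k).sgn x) (n : ℕ) :
    HasLogDeriv ν (multiFlip σ n) (cocycle σ D n) := by
  induction n with
  | zero => simp [HasLogDeriv, multiFlip, cocycle]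
  | succ n ih =>
    have hcocycle : cocycle σ D (n + 1) =
        fun x => D n * (σ n).sgn x + cocycle σ D n ((σ n).flip x) := by
      ext x
      rw [cocycle_succ, add_comm]
      congr 1
      refine Finset.sum_congr rfl fun k hk => ?_
      rw [Exchange.sgn_flip_of_disjoint (hσ (Finset.mem_range.1 hk).ne')]
    rw [hcocycle]
    exact (h n).comp ih Exchange.measurable_flip Exchange.flip_involutive
      (measurable_multiFlip n) (by fun_prop) (by fun_prop)

end MultiFlip

/-! ### Decay of the half moments of the cocycle -/

lemma tendsto_zero_of_add_mul_le {I : ℕ → ENNReal} {q : ℕ → ℝ} (hq : ∀ n, 0 ≤ q n)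
    (hdiv : ¬ Summable q) (h0 : I 0 ≠ ⊤)
    (h : ∀ n, I (n + 1) + ENNReal.ofReal (q n) * I n ≤ I n) : Tendsto I atTop (𝓝 0) := by
  have hanti : Antitone I := antitone_nat_of_succ_le fun n => le_self_add.trans (h n)
  have hsum (n : ℕ) : I n + ENNReal.ofReal (∑ k ∈ Finset.range n, q k) * I n ≤ I 0 := by
    suffices I n + ∑ k ∈ Finset.range n, ENNReal.ofReal (q k) * I k ≤ I 0 by
      rw [ENNReal.ofReal_sum_of_nonneg fun k _ => hq k, Finset.sum_mul]
      refine le_trans ?_ this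
      gcongr with k hk
      exact hanti (Finset.mem_range.1 hk).le
    induction n with
    | zero => simp
    | succ n ih =>
      rw [Finset.sum_range_succ]
      calc _ = I (n + 1) + ENNReal.ofReal (q n) * I n
            + ∑ k ∈ Finset.range n, ENNReal.ofReal (q k) * I k := by ring
        _ ≤ I n + ∑ k ∈ Finset.range n, ENNReal.ofReal (q k) * I k := by gcongr; exact h n
        _ ≤ I 0 := ih
  have hlim := ENNReal.tendsto_ofReal_atTop.comp
    ((not_summable_iff_tendsto_nat_atTop_of_nonneg hq).1 hdiv)
  have hdiv0 := ENNReal.Tendsto.const_div (a := I 0) hlim (Or.inr h0)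
  rw [ENNReal.div_top] at hdiv0
  refine tendsto_of_tendsto_of_tendsto_of_le_of_le' tendsto_const_nhds hdiv0
    (Eventually.of_forall fun _ => zero_le) ?_
  filter_upwards [hlim.eventually (lt_mem_nhds ENNReal.zero_lt_top)] with n hn
  rw [ENNReal.le_div_iff_mul_le (Or.inl hn.ne') (Or.inl ENNReal.ofReal_ne_top), mul_comm]
  exact le_add_self.trans (hsum n)

lemma not_summable_exp_half_sub_one_sq {D : ℕ → ℝ} (hD : Tendsto D atTop (𝓝 0))
    (hdiv : ¬ Summable fun k => D k ^ 2) :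
    ¬ Summable fun k => (Real.exp (D k / 2) - 1) ^ 2 := by
  have hderiv : HasDerivAt (fun t : ℝ => Real.exp (t / 2)) (1 / 2) 0 := by
    simpa using ((hasDerivAt_id (0 : ℝ)).div_const 2).exp
  have hO := (hderiv.isTheta_sub (by norm_num)).isBigO_symm.comp_tendsto
    (hD.prodMk (tendsto_pure.2 (Eventually.of_forall fun _ => rfl)))
  refine fun hsum => hdiv (summable_of_isBigO_nat hsum ?_)
  simpa [Function.comp_def] using hO.pow 2

namespace Exchange
variable {ι S : Type*} [MeasurableSpace S] [MeasurableSingletonClass S] [Finite S]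
variable {e : Exchange ι S} {ν : Measure (ι → S)} {D : ℝ} {s : Finset ι} {G : (ι → S) → ENNReal}

lemma setLIntegral_minus (h : HasLogDeriv ν e.flip fun x => D * e.sgn x)
    (hs : Disjoint s e.supp) (hG : DependsOn G (s : Set ι)) :
    ∫⁻ x in e.minus, G x ∂ν = ENNReal.ofReal (Real.exp D) * ∫⁻ x in e.plus, G x ∂ν := by
  have hGm : Measurable G := measurable_of_dependsOn hG
  have hcomp (x : ι → S) : e.plus.indicator G (e.flip x) = e.minus.indicator G x := by
    have hGx : G (e.flip x) = G x :=
      hG fun k hk => flip_apply_of_notMem x (Finset.disjoint_left.1 hs hk)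
    by_cases hx : x ∈ e.minus
    · simp [hx, flip_mem_plus hx, hGx]
    · simp [hx, flip_mem_plus_iff]
  have hexp (x : ι → S) : ENNReal.ofReal (Real.exp (D * e.sgn x)) * e.plus.indicator G x
      = e.plus.indicator (fun x => ENNReal.ofReal (Real.exp D) * G x) x := by
    by_cases hx : x ∈ e.plus <;> simp [hx, sgn_of_mem_plus]
  have hflip := h.lintegral_comp measurable_flip (by fun_prop)
    (hGm.indicator (measurableSet_plus (e := e)))
  simp only [hcomp, hexp] at hflip
  rwa [lintegral_indicator measurableSet_minus, lintegral_indicator measurableSet_plus,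
    lintegral_const_mul _ hGm] at hflip

lemma lintegral_mul_exp (h : HasLogDeriv ν e.flip fun x => D * e.sgn x)
    (hs : Disjoint s e.supp) (hG : DependsOn G (s : Set ι)) (θ : ℝ) :
    ∫⁻ x, G x * ENNReal.ofReal (Real.exp (θ * (D * e.sgn x))) ∂ν
      = ENNReal.ofReal (Real.exp (θ * D) + Real.exp ((1 - θ) * D)) * ∫⁻ x in e.plus, G x ∂ν
        + ∫⁻ x in (e.plus ∪ e.minus)ᶜ, G x ∂ν := by
  have hunion : MeasurableSet (e.plus ∪ e.minus) := measurableSet_plus.union measurableSet_minus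
  have hweight {U : Set (ι → S)} {z : ℝ} (hU : MeasurableSet U) (hz : ∀ x ∈ U, e.sgn x = z) :
      ∫⁻ x in U, G x * ENNReal.ofReal (Real.exp (θ * (D * e.sgn x))) ∂ν
        = (∫⁻ x in U, G x ∂ν) * ENNReal.ofReal (Real.exp (θ * (D * z))) := by
    rw [← lintegral_mul_const _ (measurable_of_dependsOn hG)]
    exact setLIntegral_congr_fun hU fun x hx => by simp only [hz x hx]
  have hminus : Real.exp D * Real.exp (θ * (D * -1)) = Real.exp ((1 - θ) * D) := by
    rw [← Real.exp_add]; ring_nf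
  rw [← lintegral_add_compl _ hunion, lintegral_union measurableSet_minus disjoint_plus_minus,
    hweight measurableSet_plus fun x => sgn_of_mem_plus,
    hweight measurableSet_minus fun x => sgn_of_mem_minus,
    hweight hunion.compl fun x hx => sgn_of_notMem (fun h => hx (.inl h)) fun h => hx (.inr h),
    setLIntegral_minus h hs hG, mul_right_comm, ← ENNReal.ofReal_mul (Real.exp_nonneg _), hminus,
    ENNReal.ofReal_add (Real.exp_nonneg _) (Real.exp_nonneg _)]
  simp only [mul_one, mul_zero, Real.exp_zero, ENNReal.ofReal_one]
  ring

/-- With `u = exp (D / 2)` and `a` the integral of `G` over `plus`, the weight replaces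
`(1 + u²) a` by `2 u a`, which is smaller by `(u - 1)² a`. -/
lemma lintegral_mul_exp_half_add_le (h : HasLogDeriv ν e.flip fun x => D * e.sgn x)
    (hs : Disjoint s e.supp) (hG : DependsOn G (s : Set ι)) {c : ℝ}
    (hc : ∀ w, ENNReal.ofReal c * ν (cyl s w) ≤ ν (cyl s w ∩ e.plus)) :
    ∫⁻ x, G x * ENNReal.ofReal (Real.exp (1 / 2 * (D * e.sgn x))) ∂ν
        + ENNReal.ofReal (c * (Real.exp (D / 2) - 1) ^ 2) * ∫⁻ x, G x ∂ν
      ≤ ∫⁻ x, G x ∂ν := by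
  have hplus : ENNReal.ofReal c * ∫⁻ x, G x ∂ν ≤ ∫⁻ x in e.plus, G x ∂ν := by
    rw [← smul_eq_mul, ← lintegral_smul_measure]
    refine lintegral_le_of_cyl (fun w => ?_) hG
    rw [Measure.restrict_apply (measurableSet_cyl _ _), Measure.smul_apply, smul_eq_mul]
    exact hc w
  have hloss : ENNReal.ofReal (c * (Real.exp (D / 2) - 1) ^ 2) * ∫⁻ x, G x ∂ν
      ≤ ENNReal.ofReal ((Real.exp (D / 2) - 1) ^ 2) * ∫⁻ x in e.plus, G x ∂ν := by
    rw [mul_comm c, ENNReal.ofReal_mul (sq_nonneg _), mul_assoc]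
    gcongr
  have hsq : Real.exp D = Real.exp (D / 2) ^ 2 := by
    rw [← Real.exp_nat_mul]; congr 1; push_cast; ring
  have htotal := lintegral_mul_exp h hs hG 0
  simp only [zero_mul, Real.exp_zero, ENNReal.ofReal_one, mul_one, sub_zero, one_mul] at htotal
  calc _ ≤ _ := add_le_add_right hloss _
    _ = ∫⁻ x, G x ∂ν := by
      rw [lintegral_mul_exp h hs hG, add_right_comm, ← add_mul,
        ← ENNReal.ofReal_add (by positivity) (by positivity), htotal, hsq]
      ring_nf

end Exchange

/-- Exchanges `σ n` placed off the windows `F n`, but inside `F (n + 1)`, with logarithmic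
derivatives `D n * (σ n).sgn`, such that whatever is seen in `F n`, the first pattern of `σ n`
occurs with conditional probability at least `c`. -/
structure IsTower {ι S : Type*} [MeasurableSpace S] (ν : Measure (ι → S)) (σ : ℕ → Exchange ι S)
    (D : ℕ → ℝ) (F : ℕ → Finset ι) (c : ℝ) : Prop where
  c_pos : 0 < c
  mono : Monotone F
  disjoint : ∀ n, Disjoint (F n) (σ n).supp
  supp_subset : ∀ n, (σ n).supp ⊆ F (n + 1)
  hasLogDeriv : ∀ n, HasLogDeriv ν (σ n).flip fun x => D n * (σ n).sgn x
  le_plus : ∀ n w, ENNReal.ofReal c * ν (cyl (F n) w) ≤ ν (cyl (F n) w ∩ (σ n).plus)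

namespace IsTower
variable {ι S : Type*} [MeasurableSpace S]
variable {ν : Measure (ι → S)} {σ : ℕ → Exchange ι S} {D : ℕ → ℝ} {F : ℕ → Finset ι} {c : ℝ}
variable {C : Set (ι → S)}

lemma shift (t : IsTower ν σ D F c) (N : ℕ) :
    IsTower ν (fun n => σ (N + n)) (fun n => D (N + n)) (fun n => F (N + n)) c where
  c_pos := t.c_pos
  mono := t.mono.comp fun _ _ h => Nat.add_le_add_left h N
  disjoint _ := t.disjoint _
  supp_subset _ := t.supp_subset _
  hasLogDeriv _ := t.hasLogDeriv _
  le_plus _ := t.le_plus _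

lemma disjoint_of_le (t : IsTower ν σ D F c) {m n : ℕ} (hmn : m ≤ n) :
    Disjoint (F m) (σ n).supp :=
  (t.disjoint n).mono_left (t.mono hmn)

lemma supp_subset_of_lt (t : IsTower ν σ D F c) {m n : ℕ} (hmn : m < n) : (σ m).supp ⊆ F n :=
  (t.supp_subset m).trans (t.mono hmn)

lemma pairwise_disjoint (t : IsTower ν σ D F c) :
    Pairwise fun m n => Disjoint (σ m).supp (σ n).supp := by
  have hlt {m n : ℕ} (hmn : m < n) : Disjoint (σ m).supp (σ n).supp :=
    (t.disjoint n).mono_left (t.supp_subset_of_lt hmn)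
  exact fun m n hmn => hmn.lt_or_gt.elim hlt fun h => (hlt h).symm

lemma multiFlip_mem_iff (t : IsTower ν σ D F c) (hC : DependsOn (· ∈ C) (F 0 : Set ι)) (n : ℕ)
    (x : ι → S) : multiFlip σ n x ∈ C ↔ x ∈ C :=
  (hC fun _ hk => multiFlip_apply_of_notMem x fun m _ =>
    Finset.disjoint_left.1 (t.disjoint_of_le m.zero_le) hk).to_iff

lemma dependsOn_cocycle (t : IsTower ν σ D F c) (n : ℕ) :
    DependsOn (cocycle σ D n) (F n : Set ι) :=
  MarkovSFT.dependsOn_cocycle fun _ hk => t.supp_subset_of_lt hk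

variable [MeasurableSingletonClass S] [Finite S]

lemma tendsto_setLIntegral_exp_half [IsFiniteMeasure ν] (t : IsTower ν σ D F c)
    (hD : Tendsto D atTop (𝓝 0)) (hdiv : ¬ Summable fun k => D k ^ 2)
    (hC : DependsOn (· ∈ C) (F 0 : Set ι)) :
    Tendsto (fun n => ∫⁻ x in C, ENNReal.ofReal (Real.exp (1 / 2 * cocycle σ D n x)) ∂ν) atTop
      (𝓝 0) := by
  have hCm := measurableSet_of_dependsOn hC
  refine tendsto_zero_of_add_mul_le
    (q := fun n => c * (Real.exp (D n / 2) - 1) ^ 2)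
    (fun n => mul_nonneg t.c_pos.le (sq_nonneg _)) ?_ (by simp [cocycle]) fun n => ?_
  · rw [summable_mul_left_iff t.c_pos.ne']
    exact not_summable_exp_half_sub_one_sq hD hdiv
  have hG : DependsOn
      (C.indicator fun x => ENNReal.ofReal (Real.exp (1 / 2 * cocycle σ D n x))) (F n : Set ι) :=
    dependsOn_indicator (hC.mono (t.mono n.zero_le)) fun x y hxy => by
      simp only [t.dependsOn_cocycle n hxy]
  have hstep := Exchange.lintegral_mul_exp_half_add_le (t.hasLogDeriv n) (t.disjoint n) hG
    (t.le_plus n)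
  have hmul (x : ι → S) :
      C.indicator (fun x => ENNReal.ofReal (Real.exp (1 / 2 * cocycle σ D n x))) x
          * ENNReal.ofReal (Real.exp (1 / 2 * (D n * (σ n).sgn x)))
        = C.indicator (fun x => ENNReal.ofReal (Real.exp (1 / 2 * cocycle σ D (n + 1) x))) x := by
    simp only [← Set.indicator_mul_const, ← ENNReal.ofReal_mul (Real.exp_nonneg _),
      ← Real.exp_add, ← mul_add, cocycle_succ]
    rfl
  simpa only [hmul, lintegral_indicator hCm] using hstep

end IsTower

/-! ### Stopping the cocycle near a prescribed value -/

section Near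
variable {ι S : Type*} {σ : ℕ → Exchange ι S} {D : ℕ → ℝ} {r ε : ℝ}

/-- The points at which the logarithmic derivative of `multiFlip σ n` is within `ε` of `r`. -/
def near (σ : ℕ → Exchange ι S) (D : ℕ → ℝ) (r ε : ℝ) (n : ℕ) : Set (ι → S) :=
  {x | |cocycle σ D n x - r| < ε}

lemma mem_near {n : ℕ} {x : ι → S} : x ∈ near σ D r ε n ↔ |cocycle σ D n x - r| < ε := Iff.rfl

/-- The cocycle starts at `0` and its increments are less than `ε`, so it cannot jump over the
`ε`-neighbourhood of `r` on its way down. -/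
lemma exists_mem_near_of_cocycle_le (hr : r ≤ 0) (hε : ∀ k, |D k| < ε) {n : ℕ} {x : ι → S}
    (hx : cocycle σ D n x ≤ r) : ∃ m, x ∈ near σ D r ε m := by
  induction n with
  | zero =>
    have hr0 : r = 0 := le_antisymm hr (by simpa [cocycle] using hx)
    exact ⟨0, by simpa [near, cocycle, hr0] using (abs_nonneg _).trans_lt (hε 0)⟩
  | succ n ih =>
    rcases le_or_gt (cocycle σ D n x) r with hle | hlt
    · exact ih hle
    have hinc : |D n * (σ n).sgn x| < ε := by
      rw [abs_mul]
      exact (mul_le_of_le_one_right (abs_nonneg _) (Exchange.abs_sgn_le_one x)).trans_lt (hε n)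
    refine ⟨n + 1, mem_near.2 (abs_lt.2 ?_)⟩
    rw [cocycle_succ] at hx ⊢
    rw [abs_lt] at hinc
    constructor <;> linarith

lemma multiFlip_mem_near_iff (hσ : Pairwise fun m n => Disjoint (σ m).supp (σ n).supp) {m n : ℕ}
    (hmn : m ≤ n) (x : ι → S) : multiFlip σ n x ∈ near σ D (-r) ε m ↔ x ∈ near σ D r ε m := by
  rw [mem_near, mem_near, cocycle_multiFlip hσ hmn, neg_sub_neg, abs_sub_comm]

lemma multiFlip_mem_disjointed_near_iff
    (hσ : Pairwise fun m n => Disjoint (σ m).supp (σ n).supp) (n : ℕ) (x : ι → S) :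
    multiFlip σ n x ∈ disjointed (near σ D (-r) ε) n ↔ x ∈ disjointed (near σ D r ε) n := by
  simp only [disjointed_eq_inter_compl, Set.mem_inter_iff, Set.mem_iInter, Set.mem_compl_iff]
  exact and_congr (multiFlip_mem_near_iff hσ le_rfl x)
    (forall₂_congr fun m hm => (multiFlip_mem_near_iff hσ hm.le x).not)

variable [MeasurableSpace S] [MeasurableSingletonClass S] [Finite S]

lemma measurableSet_near (n : ℕ) : MeasurableSet (near σ D r ε n) :=
  measurableSet_lt ((measurable_cocycle n).sub_const r).norm measurable_const

end Near

namespace IsTower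
variable {ι S : Type*} [MeasurableSpace S] [MeasurableSingletonClass S] [Finite S]
variable {ν : Measure (ι → S)} {σ : ℕ → Exchange ι S} {D : ℕ → ℝ} {F : ℕ → Finset ι} {c : ℝ}
variable {C E : Set (ι → S)} {r ε : ℝ}

lemma measure_le_near [IsFiniteMeasure ν] (t : IsTower ν σ D F c) (hD : Tendsto D atTop (𝓝 0))
    (hdiv : ¬ Summable fun k => D k ^ 2) (hr : r ≤ 0) (hε : ∀ k, |D k| < ε)
    (hC : DependsOn (· ∈ C) (F 0 : Set ι)) : ν C ≤ ν (C ∩ ⋃ n, near σ D r ε n) := by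
  set a := ENNReal.ofReal (Real.exp (1 / 2 * r)) with ha
  have ha0 : a ≠ 0 := by simp [ha, Real.exp_pos]
  let H (n : ℕ) (x : ι → S) : ENNReal := ENNReal.ofReal (Real.exp (1 / 2 * cocycle σ D n x))
  have hlim := (ENNReal.Tendsto.div_const (b := a) (t.tendsto_setLIntegral_exp_half hD hdiv hC)
    (Or.inr ha0)).const_add (ν (C ∩ ⋃ n, near σ D r ε n))
  rw [ENNReal.zero_div, add_zero] at hlim
  refine ge_of_tendsto' hlim fun n => ?_
  have hsub : C ⊆ (C ∩ ⋃ n, near σ D r ε n) ∪ (C ∩ {x | a ≤ H n x}) := by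
    intro x hx
    rcases le_or_gt (cocycle σ D n x) r with hle | hlt
    · exact Or.inl ⟨hx, Set.mem_iUnion.2 (exists_mem_near_of_cocycle_le hr hε hle)⟩
    · refine Or.inr ⟨hx, ENNReal.ofReal_le_ofReal (Real.exp_le_exp.2 ?_)⟩
      linarith
  have hmarkov : ν (C ∩ {x | a ≤ H n x}) ≤ (∫⁻ x in C, H n x ∂ν) / a := by
    have hHm : Measurable (H n) := by fun_prop
    rw [Set.inter_comm, ← Measure.restrict_apply (measurableSet_le measurable_const hHm)]
    exact meas_ge_le_lintegral_div hHm.aemeasurable ha0 ENNReal.ofReal_ne_top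
  exact (measure_mono hsub).trans ((measure_union_le _ _).trans (add_le_add_right hmarkov _))

lemma measure_multiFlip_preimage_le (t : IsTower ν σ D F c) {U : Set (ι → S)}
    (hU : MeasurableSet U) {n : ℕ} (hnear : U ⊆ near σ D r ε n) :
    ν (multiFlip σ n ⁻¹' U) ≤ ENNReal.ofReal (Real.exp (r + ε)) * ν U := by
  rw [(hasLogDeriv_multiFlip t.pairwise_disjoint t.hasLogDeriv n).measure_preimage
    (measurable_multiFlip n) hU, ← setLIntegral_const]
  refine setLIntegral_mono' hU fun x hx => ENNReal.ofReal_le_ofReal (Real.exp_le_exp.2 ?_)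
  linarith [(abs_lt.1 (mem_near.1 (hnear hx))).2]

/-- Stop the cocycle when it first comes near `r`. By assumption, a point of `E ∩ C` is then flipped
into `C \ E`, at which the cocycle is near `-r`. -/
lemma measure_near_le (t : IsTower ν σ D F c) (hE : MeasurableSet E)
    (hC : DependsOn (· ∈ C) (F 0 : Set ι))
    (hnull : ∀ n, ν (E ∩ multiFlip σ n ⁻¹' E ∩ near σ D r ε n) = 0) :
    ν (C ∩ ⋃ n, near σ D r ε n)
      ≤ (1 + ENNReal.ofReal (Real.exp (-r + ε))) * ν (C \ E) := by
  have hZ : MeasurableSet (C \ E) := (measurableSet_of_dependsOn hC).diff hE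
  have hm (r : ℝ) (n : ℕ) : MeasurableSet (disjointed (near σ D r ε) n ∩ (C \ E)) :=
    (MeasurableSet.disjointed measurableSet_near n).inter hZ
  have hsum (r : ℝ) : ∑' n, ν (disjointed (near σ D r ε) n ∩ (C \ E)) ≤ ν (C \ E) := by
    rw [← measure_iUnion (fun m n hmn => (disjoint_disjointed _ hmn).mono Set.inter_subset_left
      Set.inter_subset_left) (hm r)]
    exact measure_mono (Set.iUnion_subset fun n => Set.inter_subset_right)
  have hpart (n : ℕ) : ν (C ∩ disjointed (near σ D r ε) n)
      ≤ ν (disjointed (near σ D r ε) n ∩ (C \ E)) + ENNReal.ofReal (Real.exp (-r + ε))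
        * ν (disjointed (near σ D (-r) ε) n ∩ (C \ E)) := by
    have hsub : C ∩ disjointed (near σ D r ε) n ⊆ (disjointed (near σ D r ε) n ∩ (C \ E)
        ∪ multiFlip σ n ⁻¹' (disjointed (near σ D (-r) ε) n ∩ (C \ E)))
        ∪ (E ∩ multiFlip σ n ⁻¹' E ∩ near σ D r ε n) := by
      rintro x ⟨hxC, hx⟩
      have hflip := (multiFlip_mem_disjointed_near_iff t.pairwise_disjoint n x).2 hx
      have hflipC := (t.multiFlip_mem_iff hC n x).2 hxC
      by_cases hxE : x ∈ E
      · by_cases hflipE : multiFlip σ n x ∈ E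
        · exact Or.inr ⟨⟨hxE, hflipE⟩, disjointed_subset _ _ hx⟩
        · exact Or.inl (Or.inr ⟨hflip, hflipC, hflipE⟩)
      · exact Or.inl (Or.inl ⟨hx, hxC, hxE⟩)
    refine (measure_mono hsub).trans ((measure_union_le _ _).trans ?_)
    rw [hnull, add_zero]
    exact (measure_union_le _ _).trans (add_le_add_right (t.measure_multiFlip_preimage_le (hm _ n)
      (Set.inter_subset_left.trans (disjointed_subset _ _))) _)
  rw [← iUnion_disjointed, Set.inter_iUnion]
  calc _ ≤ ∑' n, ν (C ∩ disjointed (near σ D r ε) n) := measure_iUnion_le _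
    _ ≤ _ := ENNReal.tsum_le_tsum hpart
    _ ≤ ν (C \ E) + ENNReal.ofReal (Real.exp (-r + ε)) * ν (C \ E) := by
      rw [ENNReal.tsum_add, ENNReal.tsum_mul_left]
      gcongr <;> apply hsum
    _ = _ := by rw [add_mul, one_mul]

end IsTower

section Return
variable {ι S : Type*} [MeasurableSpace S] {ν : Measure (ι → S)} [IsFiniteMeasure ν]
variable {E : Set (ι → S)}

lemma exists_dependsOn_mul_measure_diff_lt (hE : MeasurableSet E) (hE0 : 0 < ν E) {K : ℝ}
    (hK : 0 ≤ K) :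
    ∃ (s : Finset ι) (C : Set (ι → S)), DependsOn (· ∈ C) (s : Set ι) ∧
      (1 + ENNReal.ofReal K) * ν (C \ E) < ν C := by
  have hE1 : 0 < ν.real E := ENNReal.toReal_pos hE0.ne' (measure_ne_top _ _)
  have hκ : 0 < ν.real E / (2 + K) := by positivity
  obtain ⟨s, C, hC, hEC⟩ := exists_dependsOn_symmDiff_lt ν hE hκ
  refine ⟨s, C, hC, ?_⟩
  have hdiff : ν.real (C \ E) ≤ ν.real (symmDiff E C) := measureReal_mono Set.subset_union_right
  have hsub : E ⊆ C ∪ symmDiff E C := fun x hx =>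
    (em (x ∈ C)).imp_right fun hxC => Or.inl ⟨hx, hxC⟩
  have hEle : ν.real E ≤ ν.real C + ν.real (symmDiff E C) :=
    (measureReal_mono hsub).trans (measureReal_union_le _ _)
  have hreal : (1 + K) * ν.real (C \ E) < ν.real C := by
    rw [lt_div_iff₀ (by positivity)] at hEC
    nlinarith [mul_le_mul_of_nonneg_left hdiff (show 0 ≤ 1 + K by positivity)]
  rw [← ofReal_measureReal, ← ofReal_measureReal (s := C), ← ENNReal.ofReal_one,
    ← ENNReal.ofReal_add zero_le_one hK, ← ENNReal.ofReal_mul (by positivity)]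
  exact (ENNReal.ofReal_lt_ofReal_iff_of_nonneg (by positivity)).2 hreal

variable [MeasurableSingletonClass S] [Finite S]
variable {σ : ℕ → Exchange ι S} {D : ℕ → ℝ} {F : ℕ → Finset ι} {c r ε : ℝ}

namespace IsTower

lemma exists_return_of_nonpos (t : IsTower ν σ D F c) (hF : ∀ s, ∃ n, s ⊆ F n)
    (hD : Tendsto D atTop (𝓝 0)) (hdiv : ¬ Summable fun k => D k ^ 2) (hE : MeasurableSet E)
    (hE0 : 0 < ν E) (hr : r ≤ 0) (hε : 0 < ε) :
    ∃ N n, 0 < ν (E ∩ multiFlip (fun k => σ (N + k)) n ⁻¹' E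
      ∩ near (fun k => σ (N + k)) (fun k => D (N + k)) r ε n) := by
  obtain ⟨s, C, hC, hCE⟩ := exists_dependsOn_mul_measure_diff_lt hE hE0
    (Real.exp_nonneg (-r + ε))
  obtain ⟨n₀, hn₀⟩ := hF s
  obtain ⟨n₁, hn₁⟩ := (Metric.tendsto_atTop.1 hD ε hε)
  set N := max n₀ n₁
  have hsmall (k : ℕ) : |D (N + k)| < ε := by
    simpa using hn₁ (N + k) ((le_max_right _ _).trans (Nat.le_add_right _ _))
  have hdivN : ¬ Summable fun k => D (N + k) ^ 2 := by
    simpa only [add_comm] using (summable_nat_add_iff (f := fun k => D k ^ 2) N).not.2 hdiv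
  have hCN : DependsOn (· ∈ C) (F (N + 0) : Set ι) :=
    hC.mono (hn₀.trans (t.mono (le_max_left _ _)))
  have hDN : Tendsto (fun k => D (N + k)) atTop (𝓝 0) := by
    simpa only [add_comm] using (tendsto_add_atTop_iff_nat N).2 hD
  refine ⟨N, ?_⟩
  by_contra! hnull
  refine absurd hCE (not_lt.2 ?_)
  exact ((t.shift N).measure_le_near hDN hdivN hr hsmall hCN).trans
    ((t.shift N).measure_near_le hE hCN fun n => le_zero_iff.1 (hnull n))

lemma exists_return (t : IsTower ν σ D F c) (hF : ∀ s, ∃ n, s ⊆ F n)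
    (hD : Tendsto D atTop (𝓝 0)) (hdiv : ¬ Summable fun k => D k ^ 2) (hE : MeasurableSet E)
    (hE0 : 0 < ν E) (r : ℝ) (hε : 0 < ε) :
    ∃ N n, 0 < ν (E ∩ multiFlip (fun k => σ (N + k)) n ⁻¹' E
      ∩ near (fun k => σ (N + k)) (fun k => D (N + k)) r ε n) := by
  rcases le_total r 0 with hr | hr
  · exact t.exists_return_of_nonpos hF hD hdiv hE hE0 hr hε
  obtain ⟨N, n, hpos⟩ := t.exists_return_of_nonpos hF hD hdiv hE hE0 (neg_nonpos.2 hr) hε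
  refine ⟨N, n, pos_iff_ne_zero.2 fun hzero => hpos.ne' ?_⟩
  have hσ := (t.shift N).pairwise_disjoint
  have hac := (hasLogDeriv_multiFlip hσ (t.shift N).hasLogDeriv n).absolutelyContinuous hzero
  have hm : MeasurableSet (E ∩ multiFlip (fun k => σ (N + k)) n ⁻¹' E
      ∩ near (fun k => σ (N + k)) (fun k => D (N + k)) r ε n) :=
    (hE.inter (measurable_multiFlip n hE)).inter (measurableSet_near n)
  rw [Measure.map_apply (measurable_multiFlip n) hm] at hac
  refine measure_mono_null ?_ hac
  rintro x hx
  refine ⟨⟨hx.1.2, ?_⟩, ?_⟩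
  · simpa only [Set.mem_preimage, multiFlip_involutive hσ n x] using hx.1.1
  · simpa using (multiFlip_mem_near_iff (r := -r) hσ le_rfl x).2 hx.2

end IsTower

end Return

/-! ### Markov measures -/

section PathWeight
variable {S : Type*} {P : ℤ → S → S → ℝ} {a b c : ℤ} {w w' : Seq S}

/-- The transition weight `P_a(w_a, w_{a+1}) ⋯ P_{b-1}(w_{b-1}, w_b)` of the path that `w` follows
on the interval `[a, b]`. -/
noncomputable def pathWeight (P : ℤ → S → S → ℝ) (a b : ℤ) (w : Seq S) : ℝ :=
  ∏ k ∈ Finset.Ico a b, P k (w k) (w (k + 1))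

lemma pathWeight_nonneg (hP : ∀ n s t, 0 ≤ P n s t) : 0 ≤ pathWeight P a b w :=
  Finset.prod_nonneg fun _ _ => hP _ _ _

lemma pathWeight_congr (h : ∀ k, a ≤ k → k ≤ b → w k = w' k) :
    pathWeight P a b w = pathWeight P a b w' := by
  refine Finset.prod_congr rfl fun k hk => ?_
  obtain ⟨hak, hkb⟩ := Finset.mem_Ico.1 hk
  rw [h k hak hkb.le, h (k + 1) (by omega) (by omega)]

lemma pathWeight_mul (hab : a ≤ b) (hbc : b ≤ c) :
    pathWeight P a b w * pathWeight P b c w = pathWeight P a c w := by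
  rw [pathWeight, pathWeight, ← Finset.prod_union (Finset.Ico_disjoint_Ico_consecutive a b c),
    Finset.Ico_union_Ico_eq_Ico hab hbc, pathWeight]

lemma pathWeight_add_natCast (a : ℤ) (m : ℕ) :
    pathWeight P a (a + m) w = ∏ l ∈ Finset.range m, P (a + l) (w (a + l)) (w (a + l + 1)) := by
  induction m with
  | zero => simp [pathWeight]
  | succ m ih =>
    have hlast : Finset.Ico (a + m) (a + m + 1) = {a + (m : ℤ)} := by ext; simp; omega
    rw [Finset.prod_range_succ, ← ih, Nat.cast_succ, ← add_assoc,
      ← pathWeight_mul (b := a + m) (by omega) (by omega)]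
    simp [pathWeight, hlast]

lemma pathWeight_eq_wordP {i : ℤ} {B : ℕ → S} {len : ℕ} (hlen : 1 ≤ len)
    (h : ∀ l < len, w (i + l) = B l) : pathWeight P i (i + len - 1) w = wordP P i B len := by
  rw [show i + len - 1 = i + (len - 1 : ℕ) by omega, pathWeight_add_natCast]
  refine Finset.prod_congr rfl fun l hl => ?_
  have hl' := Finset.mem_range.1 hl
  rw [h l (by omega), ← h (l + 1) (by omega), Nat.cast_succ, add_assoc]

lemma pow_le_pathWeight {δ : ℝ} (h0 : 0 ≤ δ) (h1 : δ ≤ 1) {n : ℕ} (hn : b - a ≤ n)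
    (h : ∀ k, a ≤ k → k < b → δ ≤ P k (w k) (w (k + 1))) : δ ^ n ≤ pathWeight P a b w :=
  calc δ ^ n ≤ δ ^ (Finset.Ico a b).card :=
        pow_le_pow_of_le_one h0 h1 (by rw [Int.card_Ico]; omega)
    _ ≤ pathWeight P a b w := by
        rw [← Finset.prod_const]
        refine Finset.prod_le_prod (fun _ _ => h0) fun k hk => ?_
        obtain ⟨hak, hkb⟩ := Finset.mem_Ico.1 hk
        exact h k hak hkb

lemma mul_pathWeight_mul_le {δ : ℝ} (h0 : 0 ≤ δ) (h1 : δ ≤ 1) {d : ℤ} {n : ℕ} (hab : a ≤ b)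
    (hbc : b ≤ c) (hcd : c ≤ d) (hn : b - a ≤ n) (hn' : d - c ≤ n) (hw : 0 ≤ pathWeight P b c w)
    (hl : ∀ k, a ≤ k → k < b → δ ≤ P k (w k) (w (k + 1)))
    (hr : ∀ k, c ≤ k → k < d → δ ≤ P k (w k) (w (k + 1))) :
    δ ^ n * pathWeight P b c w * δ ^ n ≤ pathWeight P a d w := by
  have hleft := pow_le_pathWeight h0 h1 hn hl
  have hright := pow_le_pathWeight h0 h1 hn' hr
  rw [← pathWeight_mul (hab.trans hbc) hcd, ← pathWeight_mul hab hbc]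
  have := (pow_nonneg h0 n).trans hleft
  gcongr

end PathWeight

section Shift
variable {S : Type*}

lemma shiftZ_comp_shiftZ (m n : ℤ) : shiftZ (S := S) m ∘ shiftZ n = shiftZ (m + n) := by
  ext x k
  simp [shiftZ, add_assoc]

variable [MeasurableSpace S]

lemma measurable_shiftZ (n : ℤ) : Measurable (shiftZ (S := S) n) :=
  measurable_pi_lambda _ fun k => measurable_pi_apply (k + n)

lemma map_shiftZ_map_shiftZ (μ : Measure (Seq S)) (m n : ℤ) :
    (μ.map (shiftZ n)).map (shiftZ m) = μ.map (shiftZ (m + n)) := by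
  rw [Measure.map_map (measurable_shiftZ m) (measurable_shiftZ n), shiftZ_comp_shiftZ]

lemma map_shiftZ_zero (μ : Measure (Seq S)) : μ.map (shiftZ 0) = μ := by
  have hid : shiftZ (S := S) 0 = id := by ext x k; simp [shiftZ]
  rw [hid, Measure.map_id]

variable [Fintype S] {μ : Measure (Seq S)}

lemma ShiftNonsingular.map_shiftZ (hns : ShiftNonsingular μ) (n : ℤ) :
    μ.map (shiftZ n) ≪ μ ∧ μ ≪ μ.map (shiftZ n) := by
  have hstep (m k : ℤ) (h : μ.map (shiftZ k) ≪ μ) : μ.map (shiftZ (m + k)) ≪ μ.map (shiftZ m) := by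
    rw [← map_shiftZ_map_shiftZ]
    exact h.map (measurable_shiftZ m)
  have hneg : μ.map (shiftZ (-1)) ≪ μ := by
    have h := hns.2.map (measurable_shiftZ (S := S) (-1))
    rwa [shiftMap, map_shiftZ_map_shiftZ, neg_add_cancel, map_shiftZ_zero] at h
  have hac (n : ℤ) : μ.map (shiftZ n) ≪ μ := by
    induction n with
    | zero => rw [map_shiftZ_zero]
    | succ n ih => exact (hstep n 1 hns.1).trans ih
    | pred n ih => exact (hstep (-n) (-1) hneg).trans ih
  refine ⟨hac n, ?_⟩
  simpa only [add_neg_cancel, map_shiftZ_zero] using hstep n (-n) (hac _)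

end Shift

namespace Doeblin
variable {S : Type*} {A : S → S → Bool} {P : ℤ → S → S → ℝ}

lemma exists_le_one (hD : Doeblin A P) :
    ∃ δ : ℝ, 0 < δ ∧ δ ≤ 1 ∧ ∀ n s t, A s t = true → δ ≤ P n s t := by
  obtain ⟨δ, hδ, h⟩ := hD
  exact ⟨min δ 1, by positivity, min_le_right _ _,
    fun n s t hst => (min_le_left _ _).trans ((h n s t).2 hst)⟩

lemma wordP_pos (hD : Doeblin A P) {B : ℕ → S} {len : ℕ}
    (hB : ∀ l, l + 1 < len → A (B l) (B (l + 1)) = true) (i : ℤ) : 0 < wordP P i B len := by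
  obtain ⟨δ, hδ, -, h⟩ := hD.exists_le_one
  refine Finset.prod_pos fun l hl => hδ.trans_le (h _ _ _ (hB l ?_))
  have := Finset.mem_range.1 hl
  omega

lemma shift (hD : Doeblin A P) (n : ℤ) : Doeblin A fun k => P (k + n) := by
  obtain ⟨δ, hδ, h⟩ := hD
  exact ⟨δ, hδ, fun k => h (k + n)⟩

end Doeblin

namespace IsMarkovMeasure
variable {S : Type*} [Fintype S] [MeasurableSpace S] {μ : Measure (Seq S)} {A : S → S → Bool}
  {P : ℤ → S → S → ℝ} {π : ℤ → S → ℝ}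

lemma transition_nonneg (hμ : IsMarkovMeasure μ A P π) (n : ℤ) (s t : S) : 0 ≤ P n s t :=
  (hμ.stochastic n).1 s t

lemma transition_le_one (hμ : IsMarkovMeasure μ A P π) (n : ℤ) (s t : S) : P n s t ≤ 1 := by
  rw [← (hμ.stochastic n).2 s]
  exact Finset.single_le_sum (fun t _ => hμ.transition_nonneg n s t) (Finset.mem_univ t)

lemma dist_le_one (hμ : IsMarkovMeasure μ A P π) (n : ℤ) (s : S) : π n s ≤ 1 := by
  rw [← hμ.dist_sum n]
  exact Finset.single_le_sum (fun s _ => hμ.dist_nonneg n s) (Finset.mem_univ s)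

lemma measure_cyl (hμ : IsMarkovMeasure μ A P π) {a b : ℤ} (hab : a ≤ b) (w : Seq S) :
    μ (cyl (Finset.Icc a b) w) = ENNReal.ofReal (π a (w a) * pathWeight P a b w) := by
  obtain ⟨m, rfl⟩ := Int.le.dest hab
  have hcyl : cyl (Finset.Icc a (a + m)) w
      = {x | ∀ i : Fin (m + 1), x (a - 1 + 1 + ((i : ℕ) : ℤ)) = w (a + (i : ℕ))} := by
    ext x
    simp only [mem_cyl, Finset.mem_Icc, sub_add_cancel, Set.mem_ofPred_eq]
    refine ⟨fun h i => h _ (by omega), fun h k hk => ?_⟩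
    simpa [show a + max (k - a) 0 = k by omega] using h ⟨(k - a).toNat, by omega⟩
  rw [hcyl, hμ.cylinder, pathWeight_add_natCast, ← Fin.prod_univ_eq_prod_range
    (fun l => P (a + l) (w (a + l)) (w (a + l + 1))) m]
  simp [add_assoc]

lemma measure_apply_eq (hμ : IsMarkovMeasure μ A P π) (n : ℤ) (s : S) :
    μ {x | x n = s} = ENNReal.ofReal (π n s) := by
  simpa [cyl, pathWeight] using hμ.measure_cyl (le_refl n) fun _ => s

lemma map_shiftZ [MeasurableSingletonClass S] (hμ : IsMarkovMeasure μ A P π) (n : ℤ) :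
    IsMarkovMeasure (μ.map (shiftZ n)) A (fun k => P (k + n)) (fun k => π (k + n)) := by
  have := hμ.isProb
  have hn := measurable_shiftZ (S := S) n
  have hprob : IsProbabilityMeasure (μ.map (shiftZ n)) := Measure.isProbabilityMeasure_map
    hn.aemeasurable
  have hSFT : SFT A ⊆ shiftZ n ⁻¹' SFT A := fun x hx k => by
    simpa [shiftZ, add_right_comm] using hx (k + n)
  refine
    { isProb := hprob
      stochastic := fun k => hμ.stochastic _
      compat := fun k => hμ.compat _
      dist_nonneg := fun k => hμ.dist_nonneg _
      dist_sum := fun k => hμ.dist_sum _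
      consistent := fun k t => by simpa only [add_right_comm] using hμ.consistent (k + n) t
      supp := le_antisymm prob_le_one ?_
      cylinder := fun k m w => ?_ }
  · rw [← hμ.supp]
    exact (measure_mono hSFT).trans (Measure.le_map_apply hn.aemeasurable _)
  · have hmeas : MeasurableSet {x : Seq S | ∀ i : Fin (m + 1), x (k + 1 + (i : ℕ)) = w i} := by
      rw [Set.ofPred_forall]
      exact .iInter fun i => measurableSet_apply_eq _ _
    rw [Measure.map_apply hn hmeas]
    simpa only [Set.preimage, Set.mem_ofPred_eq, shiftZ, add_right_comm _ _ n]
      using hμ.cylinder (k + n) m w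

end IsMarkovMeasure

/-! ### Lower bounds from primitivity and the Doeblin condition -/

section Glue
variable {S : Type*} {A : S → S → Bool} {M : ℕ}

/-- `A ^ M > 0`: any two symbols are joined by an admissible path with `M` steps. -/
def PowPos (A : S → S → Bool) (M : ℕ) : Prop :=
  ∀ s t : S, ∃ u : ℕ → S, u 0 = s ∧ u M = t ∧ ∀ i < M, A (u i) (u (i + 1)) = true

lemma PowPos.exists_glue (hA : PowPos A M) (x y : Seq S) (a : ℤ) :
    ∃ z : Seq S, (∀ k ≤ a, z k = x k) ∧ (∀ k, a + M ≤ k → z k = y k) ∧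
      ∀ k, (k < a → A (x k) (x (k + 1)) = true) → (a + M ≤ k → A (y k) (y (k + 1)) = true) →
        A (z k) (z (k + 1)) = true := by
  obtain ⟨u, hu0, huM, hu⟩ := hA (x a) (y (a + M))
  let z : Seq S := fun k => if k < a then x k else if k < a + M then u (k - a).toNat else y k
  have hy (k : ℤ) (hk : a + M ≤ k) : z k = y k := by
    simp [z, show ¬k < a by omega, show ¬k < a + M by omega]
  have hz (k : ℤ) (hak : a ≤ k) (hkM : k ≤ a + M) : z k = u (k - a).toNat := by
    rcases hkM.lt_or_eq with h | rfl
    · simp [z, show ¬k < a by omega, h]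
    · rw [hy _ le_rfl, add_sub_cancel_left, Int.toNat_natCast, huM]
  have hx (k : ℤ) (hk : k ≤ a) : z k = x k := by
    rcases hk.lt_or_eq with h | rfl
    · simp [z, h]
    · rw [hz _ le_rfl (by omega), sub_self, Int.toNat_zero, hu0]
  refine ⟨z, hx, hy, fun k hkx hky => ?_⟩
  rcases lt_or_ge k a with hk | hk
  · rw [hx k hk.le, hx (k + 1) (by omega)]
    exact hkx hk
  rcases lt_or_ge k (a + M) with hkM | hkM
  · rw [hz k hk hkM.le, hz (k + 1) (by omega) (by omega),
      show (k + 1 - a).toNat = (k - a).toNat + 1 by omega]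
    exact hu _ (by omega)
  · rw [hy k hkM, hy (k + 1) (by omega)]
    exact hky hkM

end Glue

namespace IsMarkovMeasure
variable {S : Type*} [Fintype S] [MeasurableSpace S] [MeasurableSingletonClass S]
  {μ : Measure (Seq S)} {A : S → S → Bool} {P : ℤ → S → S → ℝ} {π : ℤ → S → ℝ} {M : ℕ}

lemma exists_le_dist (hμ : IsMarkovMeasure μ A P π) (hD : Doeblin A P) (hA : PowPos A M) :
    ∃ c : ℝ, 0 < c ∧ ∀ n s, c ≤ π n s := by
  have := hμ.isProb
  obtain ⟨δ, hδ, hδ1, hP⟩ := hD.exists_le_one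
  refine ⟨δ ^ M, by positivity, fun n s => ?_⟩
  have hcyl (w : Seq S) :
      (ENNReal.ofReal (δ ^ M) • μ) (cyl (Finset.Icc (n - M) (n - M)) w)
        ≤ μ.restrict {x | x n = s} (cyl (Finset.Icc (n - M) (n - M)) w) := by
    obtain ⟨z, hzw, hzs, hz⟩ := hA.exists_glue w (fun _ => s) (n - M)
    have hsub : cyl (Finset.Icc (n - M) n) z
        ⊆ cyl (Finset.Icc (n - M) (n - M)) w ∩ {x | x n = s} := fun x hx =>
      ⟨fun k hk => by
        obtain rfl : k = n - M := by simpa using hk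
        rw [hx _ (by simp), hzw _ le_rfl],
      (hx n (by simp)).trans (hzs n (by omega))⟩
    have hweight := pow_le_pathWeight (a := n - M) (b := n) (P := P) (w := z) hδ.le hδ1
      (n := M) (by omega) fun k _ _ => hP _ _ _ (hz k (by omega) (by omega))
    rw [Measure.restrict_apply (measurableSet_cyl _ _)]
    refine le_trans ?_ (measure_mono hsub)
    rw [Measure.smul_apply, smul_eq_mul, hμ.measure_cyl le_rfl, hμ.measure_cyl (by omega),
      ← ENNReal.ofReal_mul (by positivity), hzw _ le_rfl, mul_comm]
    refine ENNReal.ofReal_le_ofReal ?_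
    simpa [pathWeight] using mul_le_mul_of_nonneg_left hweight (hμ.dist_nonneg _ _)
  have huniv := measure_le_of_cyl hcyl (U := Set.univ) fun _ _ _ => rfl
  rw [Measure.restrict_apply_univ, hμ.measure_apply_eq, Measure.smul_apply, measure_univ,
    smul_eq_mul, mul_one] at huniv
  exact (ENNReal.ofReal_le_ofReal_iff (hμ.dist_nonneg n s)).1 huniv

end IsMarkovMeasure

/-! ### Exchanging two blocks -/

/-- A term of an admissible configuration: an admissible pair of blocks `B`, `B'` (indexed from
`0`) of length `len`, together with two places `i`, `j` at which they do not overlap. -/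
structure Site {S : Type*} (A : S → S → Bool) where
  i : ℤ
  j : ℤ
  len : ℕ
  B : ℕ → S
  B' : ℕ → S
  len_pos : 1 ≤ len
  first : B 0 = B' 0
  last : B (len - 1) = B' (len - 1)
  ne : ∃ l < len, B l ≠ B' l
  adm : ∀ l, l + 1 < len → A (B l) (B (l + 1)) = true
  adm' : ∀ l, l + 1 < len → A (B' l) (B' (l + 1)) = true
  disjoint : i + len ≤ j

namespace Site
variable {S : Type*} {A : S → S → Bool} (σ : Site A)

/-- The coordinates covered by the two places of the site. -/
noncomputable def supp : Finset ℤ := Finset.Ico σ.i (σ.i + σ.len) ∪ Finset.Ico σ.j (σ.j + σ.len)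

/-- A sequence with the block `U` at `i` and the block `V` at `j`. -/
def pattern (U V : ℕ → S) : Seq S := fun k =>
  if k < σ.j then U (k - σ.i).toNat else V (k - σ.j).toNat

/-- The exchange of `B` at `i`, `B'` at `j` with `B'` at `i`, `B` at `j`. -/
noncomputable def exchange : Exchange ℤ S where
  supp := σ.supp
  u := σ.pattern σ.B σ.B'
  v := σ.pattern σ.B' σ.B
  ne := by
    obtain ⟨l, hl, hne⟩ := σ.ne
    have := σ.disjoint
    refine ⟨σ.i + l, by simp [supp]; omega, ?_⟩
    simpa [pattern, show σ.i + l < σ.j by omega] using hne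

/-- The log derivative of the exchange on the sequences with `B` at `i` and `B'` at `j`. -/
noncomputable def D (P : ℤ → S → S → ℝ) : ℝ :=
  Real.log (wordP P σ.i σ.B' σ.len * wordP P σ.j σ.B σ.len /
    (wordP P σ.i σ.B σ.len * wordP P σ.j σ.B' σ.len))

variable {σ} {x : Seq S} {U V : ℕ → S}

lemma mem_supp {k : ℤ} :
    k ∈ σ.supp ↔ σ.i ≤ k ∧ k < σ.i + σ.len ∨ σ.j ≤ k ∧ k < σ.j + σ.len := by
  simp [supp]

lemma mem_cyl_pattern :
    x ∈ cyl σ.supp (σ.pattern U V) ↔ ∀ l < σ.len, x (σ.i + l) = U l ∧ x (σ.j + l) = V l := by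
  have := σ.disjoint
  refine ⟨fun h l hl => ⟨?_, ?_⟩, fun h k hk => ?_⟩
  · simpa [pattern, show σ.i + l < σ.j by omega] using h (σ.i + l) (mem_supp.2 (by omega))
  · simpa [pattern, show ¬(l : ℤ) < 0 by omega] using h (σ.j + l) (mem_supp.2 (by omega))
  · rcases mem_supp.1 hk with ⟨h1, h2⟩ | ⟨h1, h2⟩
    · simpa [pattern, show k < σ.j by omega, show σ.i + max (k - σ.i) 0 = k by omega] using
        (h (k - σ.i).toNat (by omega)).1
    · simpa [pattern, h1.not_gt, show σ.j + max (k - σ.j) 0 = k by omega] using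
        (h (k - σ.j).toNat (by omega)).2

lemma mem_exchange_plus :
    x ∈ σ.exchange.plus ↔ ∀ l < σ.len, x (σ.i + l) = σ.B l ∧ x (σ.j + l) = σ.B' l :=
  mem_cyl_pattern

lemma mem_exchange_minus :
    x ∈ σ.exchange.minus ↔ ∀ l < σ.len, x (σ.i + l) = σ.B' l ∧ x (σ.j + l) = σ.B l :=
  mem_cyl_pattern

lemma flip_apply_of_not_interior {k : ℤ}
    (hk : k ≤ σ.i ∨ σ.i + σ.len - 1 ≤ k ∧ k ≤ σ.j ∨ σ.j + σ.len - 1 ≤ k) :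
    σ.exchange.flip x k = x k := by
  by_cases hmem : k ∈ σ.supp
  swap
  · exact Exchange.flip_apply_of_notMem x hmem
  have huv : σ.pattern σ.B' σ.B k = σ.pattern σ.B σ.B' k := by
    have := σ.disjoint
    have hends : k = σ.i ∨ k = σ.i + (σ.len - 1 : ℕ) ∨ k = σ.j ∨ k = σ.j + (σ.len - 1 : ℕ) := by
      have := mem_supp.1 hmem
      omega
    have := σ.len_pos
    rcases hends with rfl | rfl | rfl | rfl
    · simp [pattern, show σ.i < σ.j by omega, σ.first]
    · simp [pattern, show σ.i + (σ.len - 1 : ℕ) < σ.j by omega, σ.last]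
    · simp [pattern, σ.first]
    · simp [pattern, show ¬((σ.len - 1 : ℕ) : ℤ) < 0 by omega, σ.last]
  rcases σ.exchange.mem_plus_or_mem_minus_or x with h | h | ⟨h, h'⟩
  · exact (Exchange.flip_mem_minus h k hmem).trans (huv.trans (h k hmem).symm)
  · exact (Exchange.flip_mem_plus h k hmem).trans (huv.symm.trans (h k hmem).symm)
  · rw [Exchange.flip_of_notMem h h']

lemma exp_D {P : ℤ → S → S → ℝ} (hD : Doeblin A P) :
    Real.exp (σ.D P) * (wordP P σ.i σ.B σ.len * wordP P σ.j σ.B' σ.len)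
      = wordP P σ.i σ.B' σ.len * wordP P σ.j σ.B σ.len := by
  have hB := hD.wordP_pos σ.adm
  have hB' := hD.wordP_pos σ.adm'
  rw [D, Real.exp_log (div_pos (mul_pos (hB' _) (hB _)) (mul_pos (hB _) (hB' _))),
    div_mul_cancel₀ _ (mul_pos (hB _) (hB' _)).ne']

lemma pathWeight_of_mem_cyl_pattern {P : ℤ → S → S → ℝ} {a b : ℤ} (ha : a ≤ σ.i)
    (hb : σ.j + σ.len ≤ b + 1) (h : ∀ l < σ.len, x (σ.i + l) = U l ∧ x (σ.j + l) = V l) :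
    pathWeight P a b x = pathWeight P a σ.i x * pathWeight P (σ.i + σ.len - 1) σ.j x *
      pathWeight P (σ.j + σ.len - 1) b x * (wordP P σ.i U σ.len * wordP P σ.j V σ.len) := by
  have := σ.disjoint
  have := σ.len_pos
  rw [← pathWeight_mul (P := P) (w := x) ha (show σ.i ≤ b by omega),
    ← pathWeight_mul (b := σ.i + σ.len - 1) (by omega) (show _ ≤ b by omega),
    ← pathWeight_mul (b := σ.j) (by omega) (show _ ≤ b by omega),
    ← pathWeight_mul (a := σ.j) (b := σ.j + σ.len - 1) (by omega) (show _ ≤ b by omega),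
    pathWeight_eq_wordP σ.len_pos fun l hl => (h l hl).1,
    pathWeight_eq_wordP σ.len_pos fun l hl => (h l hl).2]
  ring

lemma pathWeight_flip_of_mem_plus {P : ℤ → S → S → ℝ} (hD : Doeblin A P) {a b : ℤ}
    (ha : a ≤ σ.i) (hb : σ.j + σ.len ≤ b + 1) (hx : x ∈ σ.exchange.plus) :
    pathWeight P a b (σ.exchange.flip x) = Real.exp (σ.D P) * pathWeight P a b x := by
  rw [pathWeight_of_mem_cyl_pattern ha hb (mem_exchange_plus.1 hx),
    pathWeight_of_mem_cyl_pattern ha hb (mem_exchange_minus.1 (Exchange.flip_mem_minus hx)),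
    ← exp_D hD,
    pathWeight_congr (b := σ.i) fun k _ hk => flip_apply_of_not_interior (x := x) (Or.inl hk),
    pathWeight_congr (a := σ.i + σ.len - 1) fun k hk hk' =>
      flip_apply_of_not_interior (x := x) (Or.inr (Or.inl ⟨hk, hk'⟩)),
    pathWeight_congr (a := σ.j + σ.len - 1) fun k hk _ =>
      flip_apply_of_not_interior (x := x) (Or.inr (Or.inr hk))]
  ring

lemma pathWeight_flip {P : ℤ → S → S → ℝ} (hD : Doeblin A P) {a b : ℤ} (ha : a ≤ σ.i)
    (hb : σ.j + σ.len ≤ b + 1) (x : Seq S) :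
    pathWeight P a b (σ.exchange.flip x)
      = Real.exp (σ.D P * σ.exchange.sgn x) * pathWeight P a b x := by
  rcases σ.exchange.mem_plus_or_mem_minus_or x with h | h | ⟨h, h'⟩
  · rw [pathWeight_flip_of_mem_plus hD ha hb h, Exchange.sgn_of_mem_plus h, mul_one]
  · have := pathWeight_flip_of_mem_plus hD ha hb (Exchange.flip_mem_plus h)
    rw [Exchange.flip_involutive] at this
    rw [this, Exchange.sgn_of_mem_minus h, ← mul_assoc, ← Real.exp_add]
    simp
  · simp [Exchange.flip_of_notMem h h', Exchange.sgn_of_notMem h h']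

/-- The coordinates between the two blocks of the site at distance at least `M` from both. -/
noncomputable def window (σ : Site A) (M : ℕ) : Finset ℤ :=
  Finset.Icc (σ.i + σ.len - 1 + M) (σ.j - M)

lemma exists_glue {M : ℕ} (hA : PowPos A M) (hM : σ.i + σ.len - 1 + M ≤ σ.j - M) (w : Seq S) :
    ∃ z ∈ σ.exchange.plus, (∀ k ∈ σ.window M, z k = w k) ∧
      (∀ k, σ.i ≤ k → k < σ.i + σ.len - 1 + M → A (z k) (z (k + 1)) = true) ∧
      ∀ k, σ.j - M ≤ k → k < σ.j + σ.len - 1 → A (z k) (z (k + 1)) = true := by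
  have := σ.len_pos
  obtain ⟨y, hyB, hyw, hy⟩ :=
    hA.exists_glue (fun k => σ.B (k - σ.i).toNat) w (σ.i + σ.len - 1)
  obtain ⟨z, hzy, hzB, hz⟩ := hA.exists_glue y (fun k => σ.B' (k - σ.j).toNat) (σ.j - M)
  have htoNat (a k : ℤ) (hk : a ≤ k) : (k + 1 - a).toNat = (k - a).toNat + 1 := by omega
  refine ⟨z, mem_exchange_plus.2 fun l hl => ⟨?_, ?_⟩, fun k hk => ?_, fun k hk hk' => ?_,
    fun k hk hk' => ?_⟩
  · rw [hzy _ (by omega), hyB _ (by omega), add_sub_cancel_left, Int.toNat_natCast]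
  · rw [hzB _ (by omega), add_sub_cancel_left, Int.toNat_natCast]
  · obtain ⟨hk, hk'⟩ := Finset.mem_Icc.1 hk
    rw [hzy k hk', hyw k hk]
  · refine hz k (fun _ => hy k (fun _ => ?_) fun _ => by omega) fun _ => by omega
    rw [htoNat _ _ hk]
    exact σ.adm _ (by omega)
  · refine hz k (fun _ => by omega) fun _ => ?_
    rw [htoNat _ _ (by omega)]
    exact σ.adm' _ (by omega)

/-- The sites of the sequence, of length at most `L`, move outwards with gaps at least `M` between
neighbouring blocks. -/
structure Spread (σ : ℕ → Site A) (M L : ℕ) : Prop where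
  len_le : ∀ n, (σ n).len ≤ L
  left : ∀ n, (σ (n + 1)).i + (σ (n + 1)).len + M ≤ (σ n).i + 1
  right : ∀ n, (σ n).j + (σ n).len + M ≤ (σ (n + 1)).j + 1
  middle : ∀ n, (σ n).i + (σ n).len - 1 + M ≤ (σ n).j - M

namespace Spread
variable {σ : ℕ → Site A} {M L : ℕ}

lemma Icc_subset_window (h : Spread σ M L) (n : ℕ) :
    Finset.Icc (σ n).i (σ n).j ⊆ (σ (n + 1)).window M := by
  have := h.left n
  have := h.right n
  have := (σ n).len_pos
  exact Finset.Icc_subset_Icc (by omega) (by omega)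

lemma monotone_window (h : Spread σ M L) : Monotone fun n => (σ n).window M := by
  refine monotone_nat_of_le_succ fun n => .trans ?_ (h.Icc_subset_window n)
  have := (σ n).len_pos
  exact Finset.Icc_subset_Icc (by omega) (by omega)

lemma exists_subset_window (h : Spread σ M L) (hM : 1 ≤ M) (s : Finset ℤ) :
    ∃ n, s ⊆ (σ n).window M := by
  have hi (n : ℕ) : (σ n).i ≤ (σ 0).i - n := by
    induction n with
    | zero => simp
    | succ n ih =>
      have := h.left n
      have := (σ (n + 1)).len_pos
      omega
  have hj (n : ℕ) : (σ 0).j + n ≤ (σ n).j := by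
    induction n with
    | zero => simp
    | succ n ih =>
      have := h.right n
      have := (σ n).len_pos
      omega
  obtain ⟨a, b, hs⟩ := bddBelow_bddAbove_iff_subset_Icc.1 ⟨s.bddBelow, s.bddAbove⟩
  rw [← Finset.coe_Icc, Finset.coe_subset] at hs
  let n := ((σ 0).i - a).toNat + (b - (σ 0).j).toNat
  have := hi n
  have := hj n
  exact ⟨n + 1, hs.trans ((Finset.Icc_subset_Icc (by omega) (by omega)).trans
    (h.Icc_subset_window n))⟩

end Spread

section Measure
variable [Fintype S] [MeasurableSpace S] [MeasurableSingletonClass S] {μ : Measure (Seq S)}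
  {P : ℤ → S → S → ℝ} {π : ℤ → S → ℝ}

variable (σ) in
lemma hasLogDeriv_flip (hμ : IsMarkovMeasure μ A P π) (hD : Doeblin A P) :
    HasLogDeriv μ σ.exchange.flip fun x => σ.D P * σ.exchange.sgn x := by
  have := hμ.isProb
  refine Exchange.hasLogDeriv_flip fun s => ?_
  obtain ⟨a, b, hs⟩ := bddBelow_bddAbove_iff_subset_Icc.1 ⟨s.bddBelow, s.bddAbove⟩
  rw [← Finset.coe_Icc, Finset.coe_subset] at hs
  have := σ.disjoint
  have hab : min a σ.i ≤ max b (σ.j + σ.len) := by omega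
  refine ⟨Finset.Icc (min a σ.i) (max b (σ.j + σ.len)),
    hs.trans (Finset.Icc_subset_Icc (min_le_left _ _) (le_max_left _ _)), fun w => ?_⟩
  rw [hμ.measure_cyl hab, hμ.measure_cyl hab, ← ENNReal.ofReal_mul (Real.exp_nonneg _),
    flip_apply_of_not_interior (Or.inl (min_le_right _ _)),
    pathWeight_flip hD (min_le_right _ _) (by omega)]
  ring_nf

lemma exists_le_measure_plus (hμ : IsMarkovMeasure μ A P π) (hD : Doeblin A P) {M : ℕ}
    (hA : PowPos A M) (L : ℕ) :
    ∃ c : ℝ, 0 < c ∧ ∀ σ : Site A, σ.len ≤ L → σ.i + σ.len - 1 + M ≤ σ.j - M → ∀ w,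
      ENNReal.ofReal c * μ (cyl (σ.window M) w) ≤ μ (cyl (σ.window M) w ∩ σ.exchange.plus) := by
  obtain ⟨δ, hδ, hδ1, hP⟩ := hD.exists_le_one
  obtain ⟨c, hc, hπ⟩ := hμ.exists_le_dist hD hA
  refine ⟨c * δ ^ (L + M) * δ ^ (L + M), by positivity, fun σ hL hM w => ?_⟩
  have := σ.len_pos
  obtain ⟨z, hz, hzw, hleft, hright⟩ := exists_glue hA hM w
  have hwindow : σ.window M ⊆ Finset.Icc σ.i (σ.j + σ.len - 1) :=
    Finset.Icc_subset_Icc (by omega) (by omega)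
  have hsupp : σ.exchange.supp ⊆ Finset.Icc σ.i (σ.j + σ.len - 1) := fun k hk => by
    have := mem_supp.1 hk
    exact Finset.mem_Icc.2 (by omega)
  have hsub : cyl (Finset.Icc σ.i (σ.j + σ.len - 1)) z ⊆ cyl (σ.window M) w ∩ σ.exchange.plus :=
    fun x hx => ⟨fun k hk => (hx k (hwindow hk)).trans (hzw k hk),
      (mem_cyl_congr fun k hk => hx k (hsupp hk)).2 hz⟩
  refine le_trans ?_ (measure_mono hsub)
  rw [window, hμ.measure_cyl hM, hμ.measure_cyl (by omega), ← ENNReal.ofReal_mul (by positivity),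
    ← pathWeight_congr fun k hk hk' => hzw k (Finset.mem_Icc.2 ⟨hk, hk'⟩)]
  refine ENNReal.ofReal_le_ofReal ?_
  have hmid := pathWeight_nonneg hμ.transition_nonneg (a := σ.i + σ.len - 1 + M) (b := σ.j - M)
    (w := z)
  calc c * δ ^ (L + M) * δ ^ (L + M) * (π _ (w _) * pathWeight P _ _ z)
      ≤ c * δ ^ (L + M) * δ ^ (L + M) * (1 * pathWeight P _ _ z) := by
        gcongr
        exact hμ.dist_le_one _ _
    _ = c * (δ ^ (L + M) * pathWeight P _ _ z * δ ^ (L + M)) := by ring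
    _ ≤ π σ.i (z σ.i) * pathWeight P σ.i (σ.j + σ.len - 1) z :=
        mul_le_mul (hπ _ _)
          (mul_pathWeight_mul_le hδ.le hδ1 (by omega) hM (by omega) (by omega) (by omega) hmid
            (fun k hk hk' => hP k _ _ (hleft k hk hk')) fun k hk hk' => hP k _ _ (hright k hk hk'))
          (by positivity) (hμ.dist_nonneg _ _)

lemma Spread.exists_isTower {σ : ℕ → Site A} {M L : ℕ} (h : Spread σ M L) (hM : 1 ≤ M)
    (hμ : IsMarkovMeasure μ A P π) (hD : Doeblin A P) (hA : PowPos A M) :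
    ∃ c, IsTower μ (fun n => (σ n).exchange) (fun n => (σ n).D P) (fun n => (σ n).window M) c := by
  obtain ⟨c, hc, hplus⟩ := exists_le_measure_plus hμ hD hA L
  refine ⟨c, hc, h.monotone_window, fun n => ?_, fun n k hk => ?_,
    fun n => (σ n).hasLogDeriv_flip hμ hD, fun n => hplus (σ n) (h.len_le n) (h.middle n)⟩
  · refine Finset.disjoint_left.2 fun k hk hk' => ?_
    have := Finset.mem_Icc.1 hk
    have := mem_supp.1 hk'
    omega
  · have := h.left n
    have := h.right n
    have := (σ n).disjoint
    have := mem_supp.1 hk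
    exact Finset.mem_Icc.2 (by omega)

end Measure

end Site

/-! ### Weak convergence of bounded orthogonal functions -/

lemma tendsto_inner_of_orthogonal {H ι : Type*} [NormedAddCommGroup H] [InnerProductSpace ℝ H]
    {v : ι → H} (hv : Pairwise fun i j => inner ℝ (v i) (v j) = 0) (h1 : ∀ i, ‖v i‖ ≤ 1) (x : H) :
    Tendsto (fun i => inner ℝ (v i) x) cofinite (𝓝 0) := by
  let e (i : {i // v i ≠ 0}) : H := ‖v i‖⁻¹ • v i
  have he : Orthonormal ℝ e :=
    ⟨fun i => norm_smul_inv_norm i.2, fun i j hij => by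
      simp [e, real_inner_smul_left, real_inner_smul_right, hv (Subtype.coe_ne_coe.2 hij)]⟩
  have hle (i : {i // v i ≠ 0}) : inner ℝ (v i) x ^ 2 ≤ ‖inner ℝ (e i) x‖ ^ 2 := by
    rw [Real.norm_eq_abs, sq_abs, real_inner_smul_left, mul_pow]
    exact le_mul_of_one_le_left (sq_nonneg _)
      (one_le_pow₀ ((one_le_inv₀ (norm_pos_iff.2 i.2)).2 (h1 i)))
  have hsum : Summable fun i => inner ℝ (v i) x ^ 2 := by
    refine (Subtype.val_injective.summable_iff fun i hi => ?_).1
      (Summable.of_nonneg_of_le (fun i => sq_nonneg _) hle (he.inner_products_summable x))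
    have : v i = 0 := by simpa using hi
    simp [this]
  refine (tendsto_zero_iff_abs_tendsto_zero _).2 ?_
  simpa [Real.sqrt_sq_eq_abs, Function.comp_def] using hsum.tendsto_cofinite_zero.sqrt

section
variable {X ι : Type*} [MeasurableSpace X] {μ ν : Measure X} {Y : ι → X → ℝ}

lemma inner_toLp_eq_integral_mul {f g : X → ℝ} (hf : MemLp f 2 μ) (hg : MemLp g 2 μ) :
    inner ℝ (hf.toLp f) (hg.toLp g) = ∫ x, f x * g x ∂μ := by
  rw [L2.inner_def]
  refine integral_congr_ae ?_
  filter_upwards [hf.coeFn_toLp, hg.coeFn_toLp] with x hfx hgx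
  simp [hfx, hgx, mul_comm]

lemma tendsto_integral_mul_of_orthogonal [IsProbabilityMeasure μ]
    (hY : ∀ i, AEStronglyMeasurable (Y i) μ) (h1 : ∀ i x, |Y i x| ≤ 1)
    (ho : Pairwise fun i j => ∫ x, Y i x * Y j x ∂μ = 0) {g : X → ℝ} (hg : MemLp g 2 μ) :
    Tendsto (fun i => ∫ x, Y i x * g x ∂μ) cofinite (𝓝 0) := by
  have hL2 (i : ι) : MemLp (Y i) 2 μ := MemLp.of_bound (hY i) 1 (ae_of_all _ (h1 i))
  have hnorm (i : ι) : ‖(hL2 i).toLp (Y i)‖ ≤ 1 := by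
    simpa [measureUnivNNReal] using
      Lp.norm_le_of_ae_bound (μ := μ) (f := (hL2 i).toLp (Y i)) zero_le_one
        ((hL2 i).coeFn_toLp.mono fun x hx => hx ▸ h1 i x)
  simpa only [inner_toLp_eq_integral_mul] using
    tendsto_inner_of_orthogonal (v := fun i => (hL2 i).toLp (Y i))
      (fun i j hij => (inner_toLp_eq_integral_mul _ _).trans (ho hij)) hnorm (hg.toLp g)

lemma tendsto_integral_mul_of_simpleFunc {l : Filter ι} (hY : ∀ i, AEStronglyMeasurable (Y i) μ)
    (h1 : ∀ i x, |Y i x| ≤ 1)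
    (h : ∀ g : SimpleFunc X ℝ, Integrable g μ → Tendsto (fun i => ∫ x, Y i x * g x ∂μ) l (𝓝 0))
    {f : X → ℝ} (hf : Integrable f μ) : Tendsto (fun i => ∫ x, Y i x * f x ∂μ) l (𝓝 0) := by
  have hint (i : ι) {f : X → ℝ} (hf : Integrable f μ) : Integrable (fun x => Y i x * f x) μ :=
    hf.bdd_mul (hY i) (ae_of_all _ (h1 i))
  rw [Metric.tendsto_nhds]
  intro ε hε
  obtain ⟨g, hfg, hg⟩ := (memLp_one_iff_integrable.2 hf).exists_simpleFunc_eLpNorm_sub_lt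
    ENNReal.one_ne_top (ε := ENNReal.ofReal (ε / 2)) (by simpa using hε)
  have hgi := memLp_one_iff_integrable.1 hg
  have hnear : ∫ x, |(f - g) x| ∂μ < ε / 2 := by
    simp only [← Real.norm_eq_abs]
    rw [integral_norm_eq_lintegral_enorm (hf.sub hgi).1, ← eLpNorm_one_eq_lintegral_enorm]
    exact (ENNReal.lt_ofReal_iff_toReal_lt hfg.ne_top).1 hfg
  filter_upwards [Metric.tendsto_nhds.1 (h g hgi) (ε / 2) (by positivity)] with i hi
  rw [Real.dist_eq, sub_zero] at hi ⊢
  have hdiff : |∫ x, Y i x * (f - g) x ∂μ| ≤ ∫ x, |(f - g) x| ∂μ := by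
    refine abs_integral_le_integral_abs.trans
      (integral_mono (hint i (hf.sub hgi)).abs (hf.sub hgi).abs fun x => ?_)
    simp only [abs_mul]
    exact mul_le_of_le_one_left (abs_nonneg _) (h1 i x)
  calc |∫ x, Y i x * f x ∂μ| = |∫ x, Y i x * g x ∂μ + ∫ x, Y i x * (f - g) x ∂μ| := by
        rw [← integral_add (hint i hgi) (hint i (hf.sub hgi))]
        simp only [Pi.sub_apply, ← mul_add, add_sub_cancel]
    _ ≤ |∫ x, Y i x * g x ∂μ| + |∫ x, Y i x * (f - g) x ∂μ| := abs_add_le _ _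
    _ < ε := by linarith

lemma tendsto_integral_of_orthogonal [IsProbabilityMeasure μ] [IsFiniteMeasure ν] (hνμ : ν ≪ μ)
    (hY : ∀ i, AEStronglyMeasurable (Y i) μ) (h1 : ∀ i x, |Y i x| ≤ 1)
    (ho : Pairwise fun i j => ∫ x, Y i x * Y j x ∂μ = 0) :
    Tendsto (fun i => ∫ x, Y i x ∂ν) cofinite (𝓝 0) := by
  simp_rw [← integral_rnDeriv_smul hνμ, smul_eq_mul, mul_comm _ (Y _ _)]
  exact tendsto_integral_mul_of_simpleFunc hY h1
    (fun g _ => tendsto_integral_mul_of_orthogonal hY h1 ho (g.memLp_of_isFiniteMeasure 2 μ))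
    Measure.integrable_toReal_rnDeriv

end

/-! ### Nonsingularity of the shift makes the transition matrices slowly varying -/

section Edge
variable {S : Type*}

/-- The set of sequences visiting `s` at time `n` and `t` at time `n + 1`. -/
def edgeSet (n : ℤ) (s t : S) : Set (Seq S) := {x | x n = s} ∩ {x | x (n + 1) = t}

/-- The martingale difference of the transition from `s` to `t` at time `n`, for transition
matrices `P`. -/
noncomputable def martDiff (P : ℤ → S → S → ℝ) (s t : S) (n : ℤ) (x : Seq S) : ℝ :=
  (edgeSet n s t).indicator 1 x - P n s t * {x : Seq S | x n = s}.indicator 1 x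

variable {P : ℤ → S → S → ℝ} {s t : S} {n : ℤ}

lemma dependsOn_martDiff : DependsOn (martDiff P s t n) (Finset.Icc n (n + 1) : Finset ℤ) := by
  classical
  intro x y hxy
  have h0 := hxy n (by simp)
  have h1 := hxy (n + 1) (by simp)
  simp only [martDiff, edgeSet, Set.indicator_apply, Set.mem_inter_iff, Set.mem_ofPred_eq,
    Pi.one_apply, h0, h1]

lemma abs_martDiff_le_one (h0 : 0 ≤ P n s t) (h1 : P n s t ≤ 1) (x : Seq S) :
    |martDiff P s t n x| ≤ 1 := by
  classical
  simp only [martDiff, edgeSet, Set.indicator_apply, Set.mem_inter_iff, Set.mem_ofPred_eq,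
    Pi.one_apply, abs_le]
  by_cases hs : x n = s <;> by_cases ht : x (n + 1) = t <;> simp [hs, ht] <;>
    constructor <;> linarith

variable [MeasurableSpace S] [MeasurableSingletonClass S] {ν : Measure (Seq S)}

lemma measurableSet_edgeSet (n : ℤ) (s t : S) : MeasurableSet (edgeSet n s t) :=
  (measurableSet_apply_eq n s).inter (measurableSet_apply_eq (n + 1) t)

lemma integral_mul_martDiff {G : Seq S → ℝ} (hG : Integrable G ν) :
    ∫ x, G x * martDiff P s t n x ∂ν
      = ∫ x in edgeSet n s t, G x ∂ν - P n s t * ∫ x in {x | x n = s}, G x ∂ν := by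
  rw [← integral_indicator (measurableSet_edgeSet n s t),
    ← integral_indicator (measurableSet_apply_eq n s), ← integral_const_mul,
    ← integral_sub (hG.indicator (measurableSet_edgeSet n s t))
      ((hG.indicator (measurableSet_apply_eq n s)).const_mul _)]
  refine integral_congr_ae (ae_of_all _ fun x => ?_)
  classical
  simp only [martDiff, Set.indicator_apply, Pi.one_apply]
  split_ifs <;> ring

end Edge

namespace IsMarkovMeasure
variable {S : Type*} [Fintype S] [MeasurableSpace S] {μ : Measure (Seq S)} {A : S → S → Bool}
  {P : ℤ → S → S → ℝ} {π : ℤ → S → ℝ} {a m n : ℤ} {s t : S}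

lemma measure_cyl_inter_apply_eq (hμ : IsMarkovMeasure μ A P π) (ham : a ≤ m) (w : Seq S) (t : S) :
    μ (cyl (Finset.Icc a m) w ∩ {x | x (m + 1) = t})
      = ENNReal.ofReal (P m (w m) t) * μ (cyl (Finset.Icc a m) w) := by
  let w' := Function.update w (m + 1) t
  have hw' {k : ℤ} (hk : k ≤ m) : w' k = w k := Function.update_of_ne (by omega) _ _
  have hlast : w' (m + 1) = t := Function.update_self _ _ _
  have hcyl : cyl (Finset.Icc a m) w ∩ {x | x (m + 1) = t} = cyl (Finset.Icc a (m + 1)) w' := by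
    ext x
    simp only [Set.mem_inter_iff, mem_cyl, Finset.mem_Icc, Set.mem_ofPred_eq]
    refine ⟨fun ⟨hx, ht⟩ k hk => ?_, fun hx => ⟨fun k hk => ?_, ?_⟩⟩
    · obtain rfl | hkm := eq_or_ne k (m + 1)
      · rw [hlast, ht]
      · rw [hw' (by omega), hx k ⟨hk.1, by omega⟩]
    · rw [hx k ⟨hk.1, by omega⟩, hw' hk.2]
    · rw [hx (m + 1) ⟨by omega, le_rfl⟩, hlast]
  have hstep : pathWeight P a (m + 1) w' = pathWeight P a m w * P m (w m) t := by
    rw [← pathWeight_mul ham (by omega : m ≤ m + 1), pathWeight_congr fun k _ hk => hw' hk]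
    simp [pathWeight, hw' le_rfl, hlast, show Finset.Ico m (m + 1) = {m} by ext; simp; omega]
  rw [hcyl, hμ.measure_cyl (by omega), hμ.measure_cyl ham, hw' ham, hstep,
    ← ENNReal.ofReal_mul (hμ.transition_nonneg _ _ _)]
  congr 1
  ring

variable [MeasurableSingletonClass S]

lemma setIntegral_edgeSet (hμ : IsMarkovMeasure μ A P π) (ham : a ≤ m) {G : Seq S → ℝ}
    (hG : DependsOn G (Finset.Icc a m : Finset ℤ)) :
    ∫ x in edgeSet m s t, G x ∂μ = P m s t * ∫ x in {x | x m = s}, G x ∂μ := by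
  have := hμ.isProb
  rw [integral_eq_of_cyl (ν₂ := ENNReal.ofReal (P m s t) • μ.restrict {x | x m = s}) ?_ hG,
    integral_smul_measure, ENNReal.toReal_ofReal (hμ.transition_nonneg _ _ _), smul_eq_mul]
  intro w
  rw [Measure.smul_apply, Measure.restrict_apply (measurableSet_cyl _ _),
    Measure.restrict_apply (measurableSet_cyl _ _), smul_eq_mul, edgeSet, ← Set.inter_assoc]
  obtain rfl | hw := eq_or_ne (w m) s
  · have hsub : cyl (Finset.Icc a m) w ⊆ {x | x m = w m} := fun x hx => mem_cyl.1 hx m (by simpa)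
    rw [Set.inter_eq_left.2 hsub, hμ.measure_cyl_inter_apply_eq ham]
  · have hempty : cyl (Finset.Icc a m) w ∩ {x | x m = s} = ∅ :=
      Set.eq_empty_of_forall_notMem fun x hx => hw ((mem_cyl.1 hx.1 m (by simpa)).symm.trans hx.2)
    simp [hempty]

lemma integral_martDiff_mul_martDiff (hμ : IsMarkovMeasure μ A P π) (s t : S) :
    Pairwise fun m n => ∫ x, martDiff P s t m x * martDiff P s t n x ∂μ = 0 := by
  have := hμ.isProb
  have hlt (m n : ℤ) (hmn : m < n) : ∫ x, martDiff P s t m x * martDiff P s t n x ∂μ = 0 := by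
    have hint : Integrable (martDiff P s t m) μ :=
      .of_bound (measurable_of_dependsOn dependsOn_martDiff).aestronglyMeasurable 1 <|
        ae_of_all _ <| abs_martDiff_le_one (hμ.transition_nonneg _ _ _) (hμ.transition_le_one _ _ _)
    have hpast : DependsOn (martDiff P s t m) (Finset.Icc m n : Finset ℤ) :=
      dependsOn_martDiff.mono (Finset.coe_subset.2 (Finset.Icc_subset_Icc_right hmn))
    rw [integral_mul_martDiff hint, hμ.setIntegral_edgeSet hmn.le hpast, sub_self]
  intro m n hmn
  obtain h | h := hmn.lt_or_gt
  · exact hlt m n h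
  · simpa only [mul_comm] using hlt n m h

lemma integral_martDiff (hμ : IsMarkovMeasure μ A P π) (Q : ℤ → S → S → ℝ) (s t : S) (n : ℤ) :
    ∫ x, martDiff Q s t n x ∂μ = (P n s t - Q n s t) * π n s := by
  have := hμ.isProb
  have h := integral_mul_martDiff (ν := μ) (P := Q) (s := s) (t := t) (n := n)
    (integrable_const (1 : ℝ))
  rw [hμ.setIntegral_edgeSet (le_refl n) fun _ _ _ => rfl, ← sub_mul] at h
  simpa [measureReal_def, hμ.measure_apply_eq, hμ.dist_nonneg n s] using h

/-- Under `μ ∘ T⁻¹` the martingale differences of `μ` have means comparable to `P (n + 1) - P n`;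
these tend to `0` because the martingale differences are orthogonal for `μ`. -/
lemma tendsto_transition_sub {M : ℕ} (hμ : IsMarkovMeasure μ A P π) (hD : Doeblin A P)
    (hA : PowPos A M) (hns : ShiftNonsingular μ) (s t : S) :
    Tendsto (fun n : ℤ => P (n + 1) s t - P n s t) cofinite (𝓝 0) := by
  have := hμ.isProb
  have hμ₁ := hμ.map_shiftZ 1
  have := hμ₁.isProb
  obtain ⟨c, hc, hπ⟩ := hμ.exists_le_dist hD hA
  have key := tendsto_integral_of_orthogonal hns.1
    (fun n => (measurable_of_dependsOn dependsOn_martDiff).aestronglyMeasurable)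
    (fun n => abs_martDiff_le_one (hμ.transition_nonneg n s t) (hμ.transition_le_one n s t))
    (hμ.integral_martDiff_mul_martDiff s t)
  simp only [shiftMap, hμ₁.integral_martDiff] at key
  refine squeeze_zero_norm (fun n => ?_) (by simpa using key.abs.mul_const c⁻¹)
  rw [← div_eq_mul_inv, le_div_iff₀ hc, Real.norm_eq_abs]
  exact mul_le_mul_of_nonneg_left ((hπ _ _).trans (le_abs_self _)) (abs_nonneg _)

end IsMarkovMeasure

section SlowlyVarying
variable {S : Type*} {A : S → S → Bool} {P : ℤ → S → S → ℝ}

lemma tendsto_sub_of_tendsto_add_one_sub {f : ℤ → ℝ}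
    (hf : Tendsto (fun n => f (n + 1) - f n) cofinite (𝓝 0)) {i j : ℤ} (hij : i ≤ j) :
    Tendsto (fun n => f (j + n) - f (i + n)) cofinite (𝓝 0) := by
  induction j, hij using Int.leInduction with
  | base => simp
  | succ j _ ih =>
    have h := (hf.comp (add_right_injective j).tendsto_cofinite).add ih
    rw [add_zero] at h
    refine h.congr fun n => ?_
    simp only [Function.comp, show j + n + 1 = j + 1 + n by ring]
    ring

lemma Doeblin.tendsto_transition_div (hD : Doeblin A P)
    (hP : ∀ s t, Tendsto (fun n : ℤ => P (n + 1) s t - P n s t) cofinite (𝓝 0)) {s t : S}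
    (hst : A s t = true) {i j : ℤ} (hij : i ≤ j) :
    Tendsto (fun n : ℤ => P (j + n) s t / P (i + n) s t) cofinite (𝓝 1) := by
  obtain ⟨δ, hδ, hPδ⟩ := hD
  have hle (k : ℤ) : δ ≤ P k s t := (hPδ k s t).2 hst
  have hpos (k : ℤ) : 0 < P k s t := hδ.trans_le (hle k)
  have hsub : Tendsto (fun n : ℤ => (P (j + n) s t - P (i + n) s t) / P (i + n) s t)
      cofinite (𝓝 0) := by
    have h := tendsto_sub_of_tendsto_add_one_sub (f := fun n => P n s t) (hP s t) hij
    replace h := h.abs.mul_const δ⁻¹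
    rw [abs_zero, zero_mul] at h
    refine squeeze_zero_norm (fun n => ?_) h
    rw [Real.norm_eq_abs, abs_div, abs_of_pos (hpos (i + n)), div_eq_mul_inv]
    gcongr
    exact hle _
  have h := hsub.add_const 1
  rw [zero_add] at h
  refine h.congr fun n => ?_
  rw [sub_div, div_self (hpos _).ne', sub_add_cancel]

lemma Site.tendsto_D (σ : Site A) (hD : Doeblin A P)
    (hP : ∀ s t, Tendsto (fun n : ℤ => P (n + 1) s t - P n s t) cofinite (𝓝 0)) :
    Tendsto (fun n : ℤ => σ.D fun k => P (k + n)) cofinite (𝓝 0) := by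
  have hword {U : ℕ → S} (hU : ∀ l, l + 1 < σ.len → A (U l) (U (l + 1)) = true) :
      Tendsto (fun n : ℤ => wordP (fun k => P (k + n)) σ.j U σ.len /
        wordP (fun k => P (k + n)) σ.i U σ.len) cofinite (𝓝 1) := by
    simp only [wordP, ← Finset.prod_div_distrib]
    have h := tendsto_finsetProd (Finset.range (σ.len - 1)) fun l hl =>
      have := σ.disjoint
      have := Finset.mem_range.1 hl
      hD.tendsto_transition_div hP (hU l (by omega)) (by omega : σ.i + l ≤ σ.j + l)
    simpa only [Finset.prod_const_one] using h
  have hlog := ((hword σ.adm).div (hword σ.adm') one_ne_zero).log (by simp)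
  rw [div_one, Real.log_one] at hlog
  refine hlog.congr fun n => ?_
  simp only [Pi.div_apply, Site.D]
  rw [div_div_div_eq, mul_comm (wordP _ σ.j σ.B σ.len)]

end SlowlyVarying

/-! ### Products of exchanges in the renormalization pseudo full-group -/

section
variable {S : Type*} [Fintype S] [MeasurableSpace S] [MeasurableSingletonClass S]
  {μ : Measure (Seq S)} {σ : ℕ → Exchange ℤ S} {D : ℤ → ℕ → ℝ}

lemma tendsto_rnDeriv_multiFlip [IsFiniteMeasure μ] (hns : ShiftNonsingular μ)
    (hσ : Pairwise fun m n => Disjoint (σ m).supp (σ n).supp)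
    (h : ∀ m k, HasLogDeriv (μ.map (shiftZ m)) (σ k).flip fun x => D m k * (σ k).sgn x)
    (hD : ∀ k, Tendsto (D · k) cofinite (𝓝 0)) (n : ℕ) :
    ∀ᵐ x ∂μ, Tendsto (fun m : ℤ =>
        (μ.map (shiftZ (-m))).rnDeriv μ (multiFlip σ n x)
            * ENNReal.ofReal (Real.exp (cocycle σ (D 0) n x))
          / (μ.map (shiftZ (-m))).rnDeriv μ x)
      cofinite (𝓝 1) := by
  have hratio : ∀ᵐ x ∂μ, ∀ m : ℤ, (μ.map (shiftZ (-m))).rnDeriv μ (multiFlip σ n x)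
      * ENNReal.ofReal (Real.exp (cocycle σ (D 0) n x)) / (μ.map (shiftZ (-m))).rnDeriv μ x
        = ENNReal.ofReal (Real.exp (cocycle σ (D (-m)) n x)) := by
    refine ae_all_iff.2 fun m => ?_
    have h0 := hasLogDeriv_multiFlip hσ (h 0) n
    rw [map_shiftZ_zero] at h0
    exact h0.rnDeriv_comp_mul_div_rnDeriv (hasLogDeriv_multiFlip hσ (h (-m)) n)
      (hns.map_shiftZ (-m)).1 (hns.map_shiftZ (-m)).2 (measurable_multiFlip n)
      (multiFlip_involutive hσ n) (measurable_cocycle n) (measurable_cocycle n)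
  filter_upwards [hratio] with x hx
  simp only [hx]
  have hcocycle : Tendsto (fun m => cocycle σ (D (-m)) n x) cofinite (𝓝 0) := by
    simpa [cocycle] using tendsto_finsetSum (Finset.range n) fun k _ =>
      ((hD k).comp neg_injective.tendsto_cofinite).mul_const ((σ k).sgn x)
  simpa using ENNReal.tendsto_ofReal ((Real.continuous_exp.tendsto 0).comp hcocycle)

/-- The product of the first `n` of a sequence of disjoint exchanges as an element of the
renormalization pseudo full-group, where `D m k` is the log derivative of the `k`-th exchange
for the shifted measure `μ ∘ T⁻ᵐ`. -/
noncomputable def renormPFG [IsFiniteMeasure μ] (hns : ShiftNonsingular μ)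
    (hσ : Pairwise fun m n => Disjoint (σ m).supp (σ n).supp)
    (h : ∀ m k, HasLogDeriv (μ.map (shiftZ m)) (σ k).flip fun x => D m k * (σ k).sgn x)
    (hD : ∀ k, Tendsto (D · k) cofinite (𝓝 0)) (n : ℕ) : RenormPFG μ where
  dom := Set.univ
  toFun := multiFlip σ n
  logDeriv := cocycle σ (D 0) n
  meas_dom := MeasurableSet.univ
  meas_toFun := measurable_multiFlip n
  meas_logDeriv := measurable_cocycle n
  injOn := (multiFlip_involutive hσ n).injective.injOn
  finite_diff := ae_of_all _ fun x => finite_multiFlip_apply_ne n x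
  deriv_spec E _ hE := by
    have h0 := hasLogDeriv_multiFlip hσ (h 0) n
    rw [map_shiftZ_zero] at h0
    rw [(multiFlip_involutive hσ n).image_eq_preimage_symm,
      h0.measure_preimage (measurable_multiFlip n) hE]
  renorm := by simpa using tendsto_rnDeriv_multiFlip hns hσ h hD n

end

lemma Site.Spread.isEssentialValueRenorm {S : Type*} [Fintype S] [MeasurableSpace S]
    [MeasurableSingletonClass S] {μ : Measure (Seq S)} {A : S → S → Bool} {P : ℤ → S → S → ℝ}
    {π : ℤ → S → ℝ} {M L : ℕ} {σ : ℕ → Site A} (h : Spread σ M L) (hM : 1 ≤ M)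
    (hμ : IsMarkovMeasure μ A P π) (hD : Doeblin A P) (hA : PowPos A M) (hns : ShiftNonsingular μ)
    (hD0 : Tendsto (fun n => (σ n).D P) atTop (𝓝 0))
    (hDdiv : ¬ Summable fun n => (σ n).D P ^ 2) (r : ℝ) : IsEssentialValueRenorm μ r := by
  intro E hE hE0 ε hε
  have := hμ.isProb
  obtain ⟨c, t⟩ := h.exists_isTower hM hμ hD hA
  obtain ⟨N, n, hpos⟩ := t.exists_return (h.exists_subset_window hM) hD0 hDdiv hE hE0 r hε
  let g : RenormPFG μ :=
    renormPFG (D := fun m k => (σ (N + k)).D fun i => P (i + m)) hns (t.shift N).pairwise_disjoint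
      (fun m k => (σ (N + k)).hasLogDeriv_flip (hμ.map_shiftZ m) (hD.shift m))
      (fun k => (σ (N + k)).tendsto_D hD (hμ.tendsto_transition_sub hD hA hns)) n
  refine ⟨g, ?_⟩
  simpa [g, renormPFG, near] using hpos

/-- **Markovian Araki–Woods lemma (convergent case).**
For a topologically mixing (with `A^M > 0`) Markov SFT with the Doeblin
condition and nonsingular shift, if there is an admissible configuration
`(B_k(i_k), B'_k(j_k))` whose sequence
`D_k = log(P_{i_k}(B'_k) P_{j_k}(B_k) / (P_{i_k}(B_k) P_{j_k}(B'_k)))`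
satisfies `D_k → 0` and `Σ D_k² = ∞`, then `e(𝓡_A) = ℝ`. -/
theorem ratioSet_renorm_eq_univ_of_admissible_configuration
    {S : Type*} [Fintype S] [MeasurableSpace S] [MeasurableSingletonClass S]
    (A : S → S → Bool)
    (P : ℤ → S → S → ℝ) (π : ℤ → S → ℝ) (μ : Measure (Seq S))
    (hμ : IsMarkovMeasure μ A P π) (hD : Doeblin A P)
    (hns : ShiftNonsingular μ)
    (M : ℕ) (hM : 1 ≤ M)
    (hprim : ∀ s t : S, ∃ u : ℕ → S,
      u 0 = s ∧ u M = t ∧ ∀ i < M, A (u i) (u (i + 1)) = true)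
    -- the admissible configuration
    (L : ℕ) (hL : 1 ≤ L)
    (Bk B'k : ℕ → ℕ → S) (len : ℕ → ℕ)
    (hlen : ∀ k, 1 ≤ len k ∧ len k ≤ L)
    (hBadm : ∀ k, ∀ l : ℕ, l + 1 < len k → A (Bk k l) (Bk k (l + 1)) = true)
    (hB'adm : ∀ k, ∀ l : ℕ, l + 1 < len k → A (B'k k l) (B'k k (l + 1)) = true)
    (hfirst : ∀ k, Bk k 0 = B'k k 0)
    (hlast : ∀ k, Bk k (len k - 1) = B'k k (len k - 1))
    (hne : ∀ k, ∃ l < len k, Bk k l ≠ B'k k l)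
    (jj : ℕ → ℤ) (hjpos : ∀ k, 1 ≤ jj k)
    (hjgap : ∀ k, (L : ℤ) + (M : ℤ) ≤ jj (k + 1) - jj k)
    (ii : ℕ → ℤ) (hineg : ∀ k, ii k ≤ -1)
    (higap : ∀ k, (L : ℤ) + (M : ℤ) ≤ ii k - ii (k + 1))
    -- the sequence D
    (D : ℕ → ℝ)
    (hDdef : ∀ k, D k = Real.log
      (wordP P (ii k) (B'k k) (len k) * wordP P (jj k) (Bk k) (len k) /
        (wordP P (ii k) (Bk k) (len k) * wordP P (jj k) (B'k k) (len k))))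
    (hD0 : Tendsto D atTop (𝓝 0))
    (hDdiv : ¬ Summable (fun k => D k ^ 2)) :
    ∀ r : ℝ, IsEssentialValueRenorm μ r := by
  -- `i_0 + len 0 ≤ j_0` can fail, so the first term is dropped.
  have hi (k : ℕ) : ii (k + 1) ≤ -1 - L - M := by linarith [hineg k, higap k]
  have hj (k : ℕ) : 1 + L + M ≤ jj (k + 1) := by linarith [hjpos k, hjgap k]
  have hlen' (k : ℕ) : (len k : ℤ) ≤ L := mod_cast (hlen k).2
  let σ (k : ℕ) : Site A :=
    { i := ii (k + 1), j := jj (k + 1), len := len (k + 1), B := Bk (k + 1), B' := B'k (k + 1),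
      len_pos := (hlen _).1, first := hfirst _, last := hlast _, ne := hne _,
      adm := hBadm _, adm' := hB'adm _, disjoint := by linarith [hi k, hj k, hlen' (k + 1)] }
  have hσD (k : ℕ) : (σ k).D P = D (k + 1) := (hDdef (k + 1)).symm
  have hσ : Site.Spread σ M L :=
    { len_le := fun k => (hlen _).2
      left := fun k => by linarith [higap (k + 1), hlen' (k + 2)]
      right := fun k => by linarith [hjgap (k + 1), hlen' (k + 1)]
      middle := fun k => by linarith [hi k, hj k, hlen' (k + 1)] }
  refine hσ.isEssentialValueRenorm hM hμ hD hprim hns ?_ ?_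
  · simpa only [hσD] using (tendsto_add_atTop_iff_nat 1).2 hD0
  · simpa only [hσD] using mt (summable_nat_add_iff (f := fun k => D k ^ 2) 1).1 hDdiv

end MarkovSFT
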